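/- arXiv:2206.15368 — 6 statements merged into one kernel-verified Lean document; each statement's English description precedes it below -/
import Mathlib

section
/- (Gagliardo–Nirenberg inequality from Sobolev's inequality by scaling) Fix an integer d ≥ 1 and set q = 2(1+2/d). Suppose there is a constant C > 0 such that for every continuously differentiable, compactly supported function G : ℝ^d → ℂ one has (∫_{ℝ^d} |G|^q)^{1/q} ≤ C (∫_{ℝ^d} |G|² + ∫_{ℝ^d} |∇G|²)^{1/2}. Then there is a constant C' > 0 such that for every continuously differentiable, compactly supported G : ℝ^d → ℂ one has (∫_{ℝ^d} |G|^q)^{1/q} ≤ C' (∫_{ℝ^d} |∇G|²)^{d/(2(d+2))} (∫_{ℝ^d} |G|²)^{1/(d+2)}. -/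
open MeasureTheory
open scoped BigOperators

/-- `|∇f(x)|² = Σᵢ |∂ᵢ f(x)|²` for a function `f : ℝ^d → ℂ`. -/
noncomputable def gradSq {d : ℕ} (f : EuclideanSpace ℝ (Fin d) → ℂ)
    (x : EuclideanSpace ℝ (Fin d)) : ℝ :=
  ∑ i : Fin d, ‖fderiv ℝ f x (EuclideanSpace.single i 1)‖ ^ 2

theorem gn_scalar (d A M K C : ℝ) (hd : 1 ≤ d) (hA : 0 ≤ A) (hM : 0 ≤ M) (hK : 0 ≤ K) (hC : 0 < C)
    (h : ∀ l : ℝ, 0 < l → (l ^ (-d) * A) ^ (1 / (2 * (1 + 2 / d))) ≤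
      C * (l ^ (-d) * M + l ^ (2:ℝ) * (l ^ (-d) * K)) ^ ((1:ℝ)/2)) :
    A ^ (1 / (2 * (1 + 2 / d))) ≤ (C * 2 ^ ((1:ℝ)/2)) * K ^ (d / (2 * (d + 2))) * M ^ (1 / (d+2)) := by
  have hd0 : 0 < d := by linarith
  have key : ∀ e : ℝ, 0 < e → A ^ (1 / (2 * (1 + 2 / d))) ≤
      (C * 2 ^ ((1:ℝ)/2)) * (K + e) ^ (d / (2 * (d + 2))) * (M + e) ^ (1 / (d+2)) := by
    intro e he
    have hm : 0 < M + e := by linarith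
    have hk : 0 < K + e := by linarith
    set m := M + e with hmdef
    set k := K + e with hkdef
    set l := (m / k) ^ ((1:ℝ)/2) with hl
    have hmk : 0 < m / k := by positivity
    have hl0 : 0 < l := by positivity
    have hl2 : l ^ (2:ℝ) * k = m := by
      rw [hl, ← Real.rpow_mul hmk.le]
      norm_num
      field_simp
    have h1 := h l hl0
    have h2 : l ^ (-d) * M + l ^ (2:ℝ) * (l ^ (-d) * K) ≤ l ^ (-d) * (2 * m) := by
      have : l ^ (-d) * (2 * m) = l ^ (-d) * m + l ^ (2:ℝ) * (l ^ (-d) * k) := by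
        rw [← hl2]; ring
      rw [this]
      have : M ≤ m := by linarith
      have : K ≤ k := by linarith
      gcongr
    have h3 : (l ^ (-d) * A) ^ (1 / (2 * (1 + 2 / d))) ≤ C * (l ^ (-d) * (2 * m)) ^ ((1:ℝ)/2) := by
      refine h1.trans ?_
      gcongr
    rw [Real.mul_rpow (by positivity) hA, Real.mul_rpow (by positivity) (by positivity),
      Real.mul_rpow (by positivity) (by positivity), ← Real.rpow_mul hl0.le,
      ← Real.rpow_mul hl0.le] at h3
    have h4 : A ^ (1 / (2 * (1 + 2 / d))) =
        l ^ (-(-d * (1 / (2 * (1 + 2 / d))))) * (l ^ (-d * (1 / (2 * (1 + 2 / d)))) *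
          A ^ (1 / (2 * (1 + 2 / d)))) := by
      rw [← mul_assoc, ← Real.rpow_add hl0]; simp
    rw [h4]
    refine (mul_le_mul_of_nonneg_left h3 (by positivity)).trans (le_of_eq ?_)
    have h5 : l ^ (-(-d * (1 / (2 * (1 + 2 / d))))) * l ^ (-d * (1/2)) * m ^ ((1:ℝ)/2)
        = k ^ (d / (2 * (d + 2))) * m ^ (1 / (d+2)) := by
      rw [← Real.rpow_add hl0, hl, ← Real.rpow_mul hmk.le, Real.div_rpow hm.le hk.le,
        div_eq_mul_inv, ← Real.rpow_neg hk.le, mul_right_comm, ← Real.rpow_add hm, mul_comm]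
      congr 2
      · field_simp; ring
      · field_simp; ring
    calc _ = C * 2 ^ ((1:ℝ)/2) * (l ^ (-(-d * (1 / (2 * (1 + 2 / d))))) * l ^ (-d * (1/2)) * m ^ ((1:ℝ)/2)) := by ring
      _ = _ := by rw [h5]; ring
  have hc : Filter.Tendsto (fun e : ℝ => (C * 2 ^ ((1:ℝ)/2)) * (K + e) ^ (d / (2 * (d + 2))) * (M + e) ^ (1 / (d+2)))
      (nhdsWithin 0 (Set.Ioi 0)) (nhds ((C * 2 ^ ((1:ℝ)/2)) * (K + 0) ^ (d / (2 * (d + 2))) * (M + 0) ^ (1 / (d+2)))) := by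
    have c1 : Continuous (fun e : ℝ => (K + e) ^ (d / (2 * (d + 2)))) :=
      (continuous_const.add continuous_id).rpow_const (fun _ => Or.inr (by positivity))
    have c2 : Continuous (fun e : ℝ => (M + e) ^ (1 / (d+2))) :=
      (continuous_const.add continuous_id).rpow_const (fun _ => Or.inr (by positivity))
    exact (((continuous_const.mul c1).mul c2).tendsto 0).mono_left nhdsWithin_le_nhds
  rw [add_zero, add_zero] at hc
  exact ge_of_tendsto hc (Filter.eventually_of_mem self_mem_nhdsWithin (fun e he => key e he))

theorem gn_integral_scale (d : ℕ) (f : EuclideanSpace ℝ (Fin d) → ℝ) (l : ℝ) (hl : 0 < l) :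
    ∫ x, f (l • x) = l ^ (-(d:ℝ)) * ∫ x, f x := by
  rw [Measure.integral_comp_smul, finrank_euclideanSpace_fin, smul_eq_mul,
    abs_of_pos (by positivity), Real.rpow_neg hl.le, Real.rpow_natCast]

theorem gn_gradSq_scale {d : ℕ} (G : EuclideanSpace ℝ (Fin d) → ℂ) (l : ℝ) (hl : 0 < l)
    (x : EuclideanSpace ℝ (Fin d)) :
    gradSq (fun y => G (l • y)) x = l ^ (2:ℝ) * gradSq G (l • x) := by
  unfold gradSq
  rw [Finset.mul_sum]
  refine Finset.sum_congr rfl fun i _ => ?_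
  rw [fderiv_comp_smul]
  simp [norm_smul, mul_pow]

/-- **Gagliardo–Nirenberg from Sobolev by scaling**: if the Sobolev inequality
`‖G‖_{L^q} ≤ C ‖G‖_{H¹}` holds (with `q = 2(1+2/d)`) for all `C¹` compactly supported
`G`, then the Gagliardo–Nirenberg inequality
`‖G‖_{L^q} ≤ C' ‖∇G‖_{L²}^{d/(d+2)} ‖G‖_{L²}^{2/(d+2)}` holds for all such `G`. -/
theorem gagliardo_nirenberg_of_sobolev (d : ℕ) (hd : 1 ≤ d) (C : ℝ) (hC : 0 < C)
    (hSob : ∀ G : EuclideanSpace ℝ (Fin d) → ℂ,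
      ContDiff ℝ 1 G → HasCompactSupport G →
      (∫ x, ‖G x‖ ^ (2 * (1 + 2 / (d : ℝ)))) ^ (1 / (2 * (1 + 2 / (d : ℝ))))
        ≤ C * ((∫ x, ‖G x‖ ^ 2) + ∫ x, gradSq G x) ^ ((1 : ℝ) / 2)) :
    ∃ C' : ℝ, 0 < C' ∧
      ∀ G : EuclideanSpace ℝ (Fin d) → ℂ,
        ContDiff ℝ 1 G → HasCompactSupport G →
        (∫ x, ‖G x‖ ^ (2 * (1 + 2 / (d : ℝ)))) ^ (1 / (2 * (1 + 2 / (d : ℝ))))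
          ≤ C' * (∫ x, gradSq G x) ^ ((d : ℝ) / (2 * ((d : ℝ) + 2))) *
              (∫ x, ‖G x‖ ^ 2) ^ (1 / ((d : ℝ) + 2)) := by
  refine ⟨C * 2 ^ ((1:ℝ)/2), by positivity, fun G hG hGc => ?_⟩
  refine gn_scalar (d:ℝ) _ _ _ C (by exact_mod_cast hd)
    (integral_nonneg fun x => by positivity) (integral_nonneg fun x => by positivity)
    (integral_nonneg fun x => Finset.sum_nonneg fun i _ => by positivity) hC fun l hl => ?_
  have h := hSob (fun x => G (l • x)) (hG.comp (contDiff_const_smul l))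
    (hGc.comp_homeomorph (Homeomorph.smulOfNeZero l hl.ne'))
  simp only [gn_gradSq_scale G l hl] at h
  rw [gn_integral_scale d (fun x => ‖G x‖ ^ (2 * (1 + 2 / (d : ℝ)))) l hl,
    gn_integral_scale d (fun x => ‖G x‖ ^ 2) l hl, integral_const_mul,
    gn_integral_scale d (fun x => gradSq G x) l hl] at h
  exact h
end

section
/- (Sobolev-type uncertainty principle) For every integer d ≥ 1 there exists a constant K > 0 depending only on d such that for every continuously differentiable, compactly supported function u : ℝ^d → ℂ, one has (∫_{ℝ^d} |∇u(x)|² dx) · (∫_{ℝ^d} |u(x)|² dx)^{2/d} ≥ K ∫_{ℝ^d} |u(x)|^{2(1+2/d)} dx. -/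
open MeasureTheory
open scoped BigOperators

open scoped ENNReal NNReal

local notation "EE" d => EuclideanSpace ℝ (Fin d)

lemma cs_aux {d : ℕ} (u : (EE d) → ℂ) (hu : ContDiff ℝ 1 u) :
    (∫⁻ x, ‖fderiv ℝ (fun y => u y * u y) x‖ₑ) ^ (2:ℝ)
      ≤ 4 * (∫⁻ x, ‖fderiv ℝ u x‖ₑ ^ (2:ℝ)) * (∫⁻ x, ‖u x‖ₑ ^ (2:ℝ)) := by
  have hcf : Continuous (fderiv ℝ u) := hu.continuous_fderiv one_ne_zero
  have hcu : Continuous u := hu.continuous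
  have h1 : ∀ x, ‖fderiv ℝ (fun y => u y * u y) x‖ₑ ≤ 2 * (‖fderiv ℝ u x‖ₑ * ‖u x‖ₑ) := by
    intro x
    have hd : DifferentiableAt ℝ u x := hu.differentiable one_ne_zero x
    rw [fderiv_fun_mul hd hd]
    refine (enorm_add_le (u x • fderiv ℝ u x) (u x • fderiv ℝ u x)).trans ?_
    rw [enorm_smul, two_mul, mul_comm]
  have h2 := ENNReal.lintegral_mul_le_Lp_mul_Lq (volume : Measure (EE d))
    Real.HolderConjugate.two_two (f := fun x => ‖fderiv ℝ u x‖ₑ) (g := fun x => ‖u x‖ₑ)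
    (by fun_prop) (by fun_prop)
  have h3 : (∫⁻ x, ‖fderiv ℝ (fun y => u y * u y) x‖ₑ) ≤
      2 * ((∫⁻ x, ‖fderiv ℝ u x‖ₑ ^ (2:ℝ)) ^ (1/2:ℝ) * (∫⁻ x, ‖u x‖ₑ ^ (2:ℝ)) ^ (1/2:ℝ)) := by
    refine (lintegral_mono h1).trans ?_
    rw [lintegral_const_mul _ (by fun_prop)]
    gcongr
    exact h2
  refine (ENNReal.rpow_le_rpow h3 (by norm_num)).trans ?_
  rw [ENNReal.mul_rpow_of_nonneg _ _ (by norm_num), ENNReal.mul_rpow_of_nonneg _ _ (by norm_num),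
    ← ENNReal.rpow_mul, ← ENNReal.rpow_mul]
  norm_num
  rw [mul_assoc]

lemma sup_aux (v : (EE 1) → ℂ) (hv : ContDiff ℝ 1 v) (h2v : HasCompactSupport v) (x : EE 1) :
    ‖v x‖ₑ ≤ ∫⁻ y, ‖fderiv ℝ v y‖ₑ := by
  let e : ℝ ≃ₗᵢ[ℝ] (EE 1) := (OrthonormalBasis.singleton (Fin 1) ℝ).repr
  obtain ⟨t, rfl⟩ := e.surjective x
  have hce : ContDiff ℝ 1 e := e.contDiff
  have h := HasCompactSupport.enorm_le_lintegral_Ici_deriv (f := v ∘ e)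
    (hv.comp hce) (h2v.comp_homeomorph e.toHomeomorph) t
  refine h.trans ((setLIntegral_le_lintegral _ _).trans ?_)
  rw [← e.measurePreserving.lintegral_comp_emb e.toHomeomorph.measurableEmbedding]
  refine lintegral_mono fun s => ?_
  have : deriv (v ∘ e) s = fderiv ℝ v (e s) (e 1) := by
    rw [fderiv_comp_deriv _ (hv.differentiable one_ne_zero).differentiableAt
      e.differentiableAt]
    congr 1
    have := (e.toContinuousLinearEquiv : ℝ →L[ℝ] (EE 1)).hasFDerivAt (x := s)
    exact this.hasDerivAt.deriv
  rw [this]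
  refine (ContinuousLinearMap.le_opENorm _ _).trans ?_
  have : ‖e 1‖ₑ = 1 := by
    rw [← ofReal_norm, e.norm_map]; simp
  rw [this, mul_one]

lemma main_aux (d : ℕ) (hd : 1 ≤ d) : ∃ C : ℝ≥0, ∀ u : (EE d) → ℂ,
    ContDiff ℝ 1 u → HasCompactSupport u →
    ∫⁻ x, ‖u x‖ₑ ^ (2 * (1 + 2 / (d:ℝ))) ≤
      C * (∫⁻ x, ‖fderiv ℝ u x‖ₑ ^ (2:ℝ)) * (∫⁻ x, ‖u x‖ₑ ^ (2:ℝ)) ^ (2 / (d:ℝ)) := by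
  obtain rfl | rfl | hd3 : d = 1 ∨ d = 2 ∨ 3 ≤ d := by omega
  · refine ⟨4, fun u hu h2u => ?_⟩
    have hcu : Continuous u := hu.continuous
    have hs := sup_aux (fun y => u y * u y) (hu.mul hu) (h2u.mul_left)
    have hc := cs_aux u hu
    set A := (∫⁻ x, ‖fderiv ℝ u x‖ₑ ^ (2:ℝ))
    set B := (∫⁻ x, ‖u x‖ₑ ^ (2:ℝ))
    have hp : ∀ x, ‖u x‖ₑ ^ (2 * (1 + 2 / ((1:ℕ):ℝ))) ≤ (4 * A * B) * ‖u x‖ₑ ^ (2:ℝ) := by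
      intro x
      have : ‖u x‖ₑ ^ (2 * (1 + 2 / ((1:ℕ):ℝ)))
          = (‖u x * u x‖ₑ) ^ (2:ℝ) * ‖u x‖ₑ ^ (2:ℝ) := by
        rw [enorm_mul, ← ENNReal.mul_rpow_of_nonneg _ _ (by norm_num)]
        norm_num
        ring
      rw [this]
      gcongr
      exact (ENNReal.rpow_le_rpow (hs x) (by norm_num)).trans hc
    refine (lintegral_mono hp).trans ?_
    rw [lintegral_const_mul _ (by fun_prop)]
    change 4 * A * B * B ≤ _
    norm_num
    rw [pow_two, mul_assoc, mul_assoc]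
  · refine ⟨lintegralPowLePowLIntegralFDerivConst (volume : Measure (EE 2)) 2 * 4,
      fun u hu h2u => ?_⟩
    have hc := cs_aux u hu
    have hg := lintegral_pow_le_pow_lintegral_fderiv (volume : Measure (EE 2))
      (u := fun y => u y * u y) (hu.mul hu) (h2u.mul_left) (p := 2)
      (by simpa using Real.HolderConjugate.two_two)
    have : ∀ x, ‖u x‖ₑ ^ (2 * (1 + 2 / ((2:ℕ):ℝ))) = ‖u x * u x‖ₑ ^ (2:ℝ) := by
      intro x
      rw [enorm_mul]
      norm_num
      ring
    simp_rw [this]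
    refine hg.trans ((mul_le_mul_right hc _).trans ?_)
    norm_num
    simp only [mul_assoc, le_refl]
  · have hd3' : (3:ℝ) ≤ d := by exact_mod_cast hd3
    set q : ℝ := 2 * d / (d - 2) with hq
    have hq0 : 0 < q := by apply div_pos <;> linarith
    set p' : ℝ≥0 := q.toNNReal with hp'
    have hp'q : (p' : ℝ) = q := Real.coe_toNNReal _ hq0.le
    set S := SNormLESNormFDerivOfEqConst ℂ (volume : Measure (EE d)) ((2:ℝ≥0):ℝ)
    refine ⟨S ^ 2, fun u hu h2u => ?_⟩
    have hcu : Continuous u := hu.continuous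
    have hg := eLpNorm_le_eLpNorm_fderiv_of_eq (volume : Measure (EE d)) hu h2u
      (p := 2) (p' := p') (by norm_num) (by simp; omega)
      (by
        rw [hp'q, hq]
        have : (d:ℝ) - 2 ≠ 0 := by linarith
        simp
        field_simp)
    have hr : Real.HolderConjugate ((d:ℝ) / (d - 2)) (d / 2) := by
      rw [Real.holderConjugate_iff]
      have h0 : (d:ℝ) - 2 > 0 := by linarith
      constructor
      · rw [lt_div_iff₀ h0]; linarith
      · field_simp; ring
    have hh := ENNReal.lintegral_mul_le_Lp_mul_Lq (volume : Measure (EE d)) hr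
      (f := fun x => ‖u x‖ₑ ^ (2:ℝ)) (g := fun x => ‖u x‖ₑ ^ (4 / (d:ℝ)))
      (by fun_prop) (by fun_prop)
    have e1 : ∀ x, ‖u x‖ₑ ^ (2 * (1 + 2 / (d:ℝ)))
        = ((fun x => ‖u x‖ₑ ^ (2:ℝ)) * (fun x => ‖u x‖ₑ ^ (4 / (d:ℝ)))) x := by
      intro x
      rw [Pi.mul_apply, ← ENNReal.rpow_add_of_nonneg _ _ (by norm_num) (by positivity)]
      congr 1; ring
    simp_rw [e1]
    refine hh.trans ?_
    simp_rw [← ENNReal.rpow_mul]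
    have hx : (d:ℝ) ≠ 0 := by linarith
    have hx2 : (d:ℝ) - 2 ≠ 0 := by linarith
    rw [show 4 / (d:ℝ) * (d / 2) = 2 by field_simp; norm_num,
      show 1 / ((d:ℝ)/2) = 2 / d by field_simp, show 2 * ((d:ℝ) / (d-2)) = q by rw [hq]; ring,
      show 1 / ((d:ℝ) / (d-2)) = 1 / q * 2 by rw [hq]; field_simp]
    gcongr
    have hg2 := ENNReal.rpow_le_rpow hg (z := 2) (by norm_num)
    have hp0 : p' ≠ 0 := by intro h; rw [h] at hp'q; simp at hp'q; linarith
    rw [eLpNorm_nnreal_eq_lintegral hp0, eLpNorm_nnreal_eq_lintegral (by norm_num),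
      ENNReal.mul_rpow_of_nonneg _ _ (by norm_num), ← ENNReal.rpow_mul, ← ENNReal.rpow_mul,
      hp'q] at hg2
    refine hg2.trans (le_of_eq ?_)
    norm_num [S]

lemma fderiv_le_gradSq {d : ℕ} (u : (EE d) → ℂ) (x : EE d) :
    ‖fderiv ℝ u x‖ ^ 2 ≤ gradSq u x := by
  have h0 : 0 ≤ gradSq u x := Finset.sum_nonneg fun _ _ => by positivity
  rw [← Real.le_sqrt (norm_nonneg _) h0]
  refine ContinuousLinearMap.opNorm_le_bound _ (Real.sqrt_nonneg _) fun v => ?_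
  have hv : v = ∑ i, v i • EuclideanSpace.single i (1:ℝ) := by
    ext j
    simp [Finset.sum_apply, Pi.single_apply]
  conv_lhs => rw [hv, map_sum]
  refine (norm_sum_le _ _).trans ?_
  simp_rw [map_smul, norm_smul]
  rw [EuclideanSpace.norm_eq v, gradSq, mul_comm]
  exact Real.sum_mul_le_sqrt_mul_sqrt _ _ _

lemma bridge {d : ℕ} {F : Type*} [NormedAddCommGroup F] (f : (EE d) → F)
    (hf : Continuous f) (h2f : HasCompactSupport f) (p : ℝ) (hp : 0 < p) :
    ENNReal.ofReal (∫ x, ‖f x‖ ^ p) = ∫⁻ x, ‖f x‖ₑ ^ p := by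
  rw [ofReal_integral_eq_lintegral_ofReal]
  · refine lintegral_congr fun x => ?_
    rw [← ENNReal.ofReal_rpow_of_nonneg (norm_nonneg _) hp.le, ofReal_norm]
  · refine Continuous.integrable_of_hasCompactSupport
      (hf.norm.rpow_const fun _ => Or.inr hp.le) ?_
    exact h2f.comp_left (g := fun y : F => ‖y‖ ^ p) (by simp [hp.ne'])
  · exact Filter.Eventually.of_forall fun x => by positivity

/-- **Sobolev-type uncertainty principle**:
`(∫ |∇u|²) (∫ |u|²)^{2/d} ≥ K ∫ |u|^{2(1+2/d)}` for `C¹` compactly supported `u`. -/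
theorem sobolev_uncertainty (d : ℕ) (hd : 1 ≤ d) :
    ∃ K : ℝ, 0 < K ∧
      ∀ u : EuclideanSpace ℝ (Fin d) → ℂ,
        ContDiff ℝ 1 u → HasCompactSupport u →
        (∫ x, gradSq u x) * (∫ x, ‖u x‖ ^ 2) ^ (2 / (d : ℝ))
          ≥ K * ∫ x, ‖u x‖ ^ (2 * (1 + 2 / (d : ℝ))) := by
  obtain ⟨C, hC⟩ := main_aux d hd
  refine ⟨((C:ℝ) + 1)⁻¹, by positivity, fun u hu h2u => ?_⟩
  have hcf : Continuous (fderiv ℝ u) := hu.continuous_fderiv one_ne_zero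
  have h2f : HasCompactSupport (fderiv ℝ u) := h2u.fderiv ℝ
  have hd0 : (0:ℝ) < d := by exact_mod_cast hd
  have h := hC u hu h2u
  rw [← bridge u hu.continuous h2u _ (by positivity),
    ← bridge u hu.continuous h2u _ (by positivity), ← bridge _ hcf h2f _ (by positivity)] at h
  simp only [Real.rpow_two] at h
  have hA : 0 ≤ ∫ x, ‖fderiv ℝ u x‖ ^ 2 := integral_nonneg fun _ => by positivity
  have hB : 0 ≤ ∫ x, ‖u x‖ ^ 2 := integral_nonneg fun _ => by positivity
  rw [ENNReal.ofReal_rpow_of_nonneg hB (by positivity), ← ENNReal.ofReal_coe_nnreal,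
    ← ENNReal.ofReal_mul (by positivity), ← ENNReal.ofReal_mul (by positivity),
    ENNReal.ofReal_le_ofReal_iff (by positivity)] at h
  have hi : ∀ i, Integrable (fun x => ‖fderiv ℝ u x (EuclideanSpace.single i 1)‖ ^ 2) := by
    intro i
    refine Continuous.integrable_of_hasCompactSupport (by fun_prop) ?_
    exact h2f.comp_left
      (g := fun L : (EE d) →L[ℝ] ℂ => ‖L (EuclideanSpace.single i 1)‖ ^ 2) (by simp)
  have hG : ∫ x, ‖fderiv ℝ u x‖ ^ 2 ≤ ∫ x, gradSq u x := by
    refine integral_mono ?_ ?_ (fderiv_le_gradSq u)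
    · refine Continuous.integrable_of_hasCompactSupport (by fun_prop) ?_
      exact h2f.comp_left (g := fun L : (EE d) →L[ℝ] ℂ => ‖L‖ ^ 2) (by simp)
    · exact integrable_finsetSum _ fun i _ => hi i
  have hBp : 0 ≤ (∫ x, ‖u x‖ ^ 2) ^ (2 / (d : ℝ)) := by positivity
  rw [ge_iff_le, inv_mul_le_iff₀ (by positivity)]
  refine h.trans ?_
  rw [mul_assoc]
  have hAB := mul_nonneg hA hBp
  have := mul_le_mul_of_nonneg_right hG hBp
  have hC0 : (0:ℝ) ≤ C := C.2
  nlinarith [mul_le_mul_of_nonneg_left this hC0]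
end

section
/- For every integer d ≥ 1 there exists a constant K > 0 depending only on d such that: for every N ≥ 1 and every family u_1, …, u_N of continuously differentiable, compactly supported functions from ℝ^d to ℂ with ∫_{ℝ^d} |u_n|² = 1 for each n (normalized but not necessarily orthogonal), one has Σ_{n=1}^N ∫_{ℝ^d} |∇u_n(x)|² dx ≥ (K / N^{2/d}) ∫_{ℝ^d} (Σ_{n=1}^N |u_n(x)|²)^{1+2/d} dx. -/
open MeasureTheory
open scoped BigOperators

open scoped ENNReal NNReal

theorem opnorm_sq_le_gradSq {d : ℕ} (f : EuclideanSpace ℝ (Fin d) → ℂ)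
    (x : EuclideanSpace ℝ (Fin d)) : ‖fderiv ℝ f x‖ ^ 2 ≤ gradSq f x := by
  have h0 : 0 ≤ gradSq f x := Finset.sum_nonneg fun i _ => by positivity
  have : ‖fderiv ℝ f x‖ ≤ Real.sqrt (gradSq f x) := by
    refine ContinuousLinearMap.opNorm_le_bound _ (Real.sqrt_nonneg _) fun y => ?_
    have hy : y = ∑ i, y i • EuclideanSpace.single i (1 : ℝ) := by
      ext j
      simp [Finset.sum_apply, Pi.single_apply]
    calc ‖fderiv ℝ f x y‖ = ‖∑ i, y i • fderiv ℝ f x (EuclideanSpace.single i (1 : ℝ))‖ := by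
          conv_lhs => rw [hy]
          simp [map_sum]
      _ ≤ ∑ i, ‖fderiv ℝ f x (EuclideanSpace.single i (1 : ℝ))‖ * |y i| := by
          refine (norm_sum_le _ _).trans (Finset.sum_le_sum fun i _ => ?_)
          rw [norm_smul, Real.norm_eq_abs, mul_comm]
      _ ≤ Real.sqrt (∑ i, ‖fderiv ℝ f x (EuclideanSpace.single i (1 : ℝ))‖ ^ 2) *
            Real.sqrt (∑ i, |y i| ^ 2) := Real.sum_mul_le_sqrt_mul_sqrt _ _ _
      _ = Real.sqrt (gradSq f x) * ‖y‖ := by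
          rw [EuclideanSpace.norm_eq]
          simp [gradSq]
  calc ‖fderiv ℝ f x‖ ^ 2 ≤ Real.sqrt (gradSq f x) ^ 2 := by gcongr
    _ = gradSq f x := Real.sq_sqrt h0

/-- Cauchy-Schwarz for the derivative of `‖u‖ ^ s`. -/
theorem lintegral_fderiv_rpow_le {d : ℕ} (u : EuclideanSpace ℝ (Fin d) → ℂ)
    (hu : ContDiff ℝ 1 u) (s : ℝ≥0) (hs : 1 < s) :
    ∫⁻ x, ‖fderiv ℝ (fun x => ‖u x‖ ^ (s : ℝ)) x‖ₑ ≤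
      s * ((∫⁻ x, ‖u x‖ₑ ^ (2 * ((s : ℝ) - 1))) ^ (1 / 2 : ℝ) *
        (∫⁻ x, ‖fderiv ℝ u x‖ₑ ^ (2 : ℝ)) ^ (1 / 2 : ℝ)) := by
  have hm : Measurable fun x => ‖u x‖ₑ := hu.continuous.enorm.measurable
  have hm' : Measurable fun x => ‖fderiv ℝ u x‖ₑ :=
    (hu.continuous_fderiv one_ne_zero).enorm.measurable
  calc ∫⁻ x, ‖fderiv ℝ (fun x => ‖u x‖ ^ (s : ℝ)) x‖ₑ
      ≤ ∫⁻ x, s * ((‖u x‖ₑ ^ (2 * ((s : ℝ) - 1))) ^ (1 / 2 : ℝ) *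
          (‖fderiv ℝ u x‖ₑ ^ (2 : ℝ)) ^ (1 / 2 : ℝ)) := by
        refine lintegral_mono fun x => ?_
        refine (enorm_fderiv_norm_rpow_le (hu.differentiable one_ne_zero) hs).trans ?_
        rw [← ENNReal.rpow_mul, ← ENNReal.rpow_mul, mul_assoc]
        apply le_of_eq
        congr 2
        · congr 1; ring
        · norm_num
    _ = s * ∫⁻ x, ((‖u x‖ₑ ^ (2 * ((s : ℝ) - 1))) ^ (1 / 2 : ℝ) *
          (‖fderiv ℝ u x‖ₑ ^ (2 : ℝ)) ^ (1 / 2 : ℝ)) := by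
        rw [lintegral_const_mul]
        fun_prop
    _ ≤ _ := by
        gcongr
        exact ENNReal.lintegral_mul_norm_pow_le (hm.pow_const _).aemeasurable
          (hm'.pow_const _).aemeasurable (by norm_num)
          (by norm_num) (by norm_num)

theorem rpow_compactSupport {d : ℕ} {u : EuclideanSpace ℝ (Fin d) → ℂ}
    (h : HasCompactSupport u) {s : ℝ} (hs : 0 < s) :
    HasCompactSupport (fun x => ‖u x‖ ^ s) :=
  h.comp_left (g := fun z : ℂ => ‖z‖ ^ s) (by simp [hs.ne'])

theorem enorm_rpow_norm (z : ℂ) {s : ℝ} (hs : 0 ≤ s) : ‖(‖z‖ ^ s : ℝ)‖ₑ = ‖z‖ₑ ^ s := by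
  rw [Real.enorm_rpow_of_nonneg (norm_nonneg _) hs, enorm_norm]

theorem lintegral_ofReal_rpow {d : ℕ} {u : EuclideanSpace ℝ (Fin d) → ℂ}
    (hu : ContDiff ℝ 1 u) (h2u : HasCompactSupport u) {s : ℝ} (hs : 0 < s) :
    ENNReal.ofReal (∫ x, ‖u x‖ ^ s) = ∫⁻ x, ‖u x‖ₑ ^ s := by
  rw [ofReal_integral_eq_lintegral_ofReal]
  · refine lintegral_congr fun x => ?_
    rw [← enorm_rpow_norm _ hs.le, Real.enorm_eq_ofReal (by positivity)]
  · exact (hu.continuous.norm.rpow_const fun _ => Or.inr hs.le).integrable_of_hasCompactSupport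
      (rpow_compactSupport h2u hs)
  · exact Filter.Eventually.of_forall fun x => by positivity

theorem gn_two_le (d : ℕ) (hd : 2 ≤ d) : ∃ C : ℝ≥0, ∀ u : EuclideanSpace ℝ (Fin d) → ℂ,
    ContDiff ℝ 1 u → HasCompactSupport u → (∫⁻ x, ‖u x‖ₑ ^ (2 : ℝ)) = 1 →
    ∫⁻ x, ‖u x‖ₑ ^ (2 + 4 / (d : ℝ)) ≤ C * ∫⁻ x, ‖fderiv ℝ u x‖ₑ ^ (2 : ℝ) := by
  have hd2 : (2 : ℝ) ≤ d := by exact_mod_cast hd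
  have hd0 : (0 : ℝ) < d := by linarith
  have hd1 : (0 : ℝ) < d - 1 := by linarith
  obtain ⟨p, hp⟩ : ∃ p : ℝ, p = d / (d - 1) := ⟨_, rfl⟩
  have hp0 : 0 < p := by rw [hp]; positivity
  have hpc : Real.HolderConjugate (Module.finrank ℝ (EuclideanSpace ℝ (Fin d))) p := by
    rw [finrank_euclideanSpace_fin, hp]
    exact Real.HolderConjugate.conjExponent (by linarith)
  obtain ⟨s, hs⟩ : ∃ s : ℝ≥0, (s : ℝ) = (2 + 4 / d) * (d - 1) / d :=
    ⟨⟨(2 + 4 / d) * (d - 1) / d, by positivity⟩, rfl⟩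
  have hs1 : (1 : ℝ) < s := by
    rw [hs, lt_div_iff₀ hd0]
    have : 0 < 4 / (d : ℝ) := by positivity
    nlinarith
  have hs1' : 1 < s := by exact_mod_cast hs1
  obtain ⟨b, hb⟩ : ∃ b : ℝ, b = p / 2 := ⟨_, rfl⟩
  have hb0 : 0 < b := by rw [hb]; positivity
  set C0 := lintegralPowLePowLIntegralFDerivConst
    (volume : Measure (EuclideanSpace ℝ (Fin d))) p with hC0
  refine ⟨(C0 * s ^ p) ^ (1 / b), fun u hu h2u hn => ?_⟩
  have hm : Measurable fun x => ‖u x‖ₑ := hu.continuous.enorm.measurable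
  set Q := ∫⁻ x, ‖u x‖ₑ ^ (2 + 4 / (d : ℝ)) with hQ
  set G := ∫⁻ x, ‖fderiv ℝ u x‖ₑ ^ (2 : ℝ) with hG
  have hQtop : Q ≠ ⊤ := by
    rw [hQ, ← lintegral_ofReal_rpow hu h2u (by positivity)]
    exact ENNReal.ofReal_ne_top
  have h1 : ∫⁻ x, ‖u x‖ₑ ^ (2 * ((s : ℝ) - 1)) ≤ Q ^ (1 - 2 / (d : ℝ)) := by
    have h2d : 2 / (d : ℝ) ≤ 1 := by rw [div_le_one hd0]; exact hd2
    have hq0 : (0 : ℝ) ≤ 4 / d := by positivity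
    calc ∫⁻ x, ‖u x‖ₑ ^ (2 * ((s : ℝ) - 1))
        = ∫⁻ x, (‖u x‖ₑ ^ (2 : ℝ)) ^ (2 / (d : ℝ)) *
            (‖u x‖ₑ ^ (2 + 4 / (d : ℝ))) ^ (1 - 2 / (d : ℝ)) := by
          refine lintegral_congr fun x => ?_
          rw [← ENNReal.rpow_mul, ← ENNReal.rpow_mul, ← ENNReal.rpow_add_of_nonneg]
          · congr 1
            rw [hs]
            field_simp
            ring
          · positivity
          · have : 0 ≤ 1 - 2 / (d : ℝ) := by linarith
            positivity
      _ ≤ (∫⁻ x, ‖u x‖ₑ ^ (2 : ℝ)) ^ (2 / (d : ℝ)) * Q ^ (1 - 2 / (d : ℝ)) :=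
          ENNReal.lintegral_mul_norm_pow_le (hm.pow_const _).aemeasurable
            (hm.pow_const _).aemeasurable (by positivity)
            (by linarith) (by ring)
      _ = _ := by rw [hn]; simp
  have h2 : Q ≤ C0 * (s * ((Q ^ (1 - 2 / (d : ℝ))) ^ (1 / 2 : ℝ) * G ^ (1 / 2 : ℝ))) ^ p := by
    have := lintegral_pow_le_pow_lintegral_fderiv
      (volume : Measure (EuclideanSpace ℝ (Fin d))) (hu.norm_rpow hs1)
      (rpow_compactSupport h2u (by linarith)) hpc
    have e : ∫⁻ x, ‖(‖u x‖ ^ (s : ℝ) : ℝ)‖ₑ ^ p = Q := by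
      refine lintegral_congr fun x => ?_
      rw [enorm_rpow_norm _ (by linarith), ← ENNReal.rpow_mul]
      congr 1
      rw [hs, hp]
      field_simp
    rw [e] at this
    refine this.trans ?_
    gcongr
    refine (lintegral_fderiv_rpow_le u hu s hs1').trans ?_
    gcongr
  by_cases hQ0 : Q = 0
  · rw [hQ0]; exact zero_le
  have h3 : Q ^ (1 - b) * Q ^ b ≤ Q ^ (1 - b) * (C0 * s ^ p * G ^ b) := by
    rw [← ENNReal.rpow_add _ _ hQ0 hQtop]
    rw [show 1 - b + b = 1 by ring, ENNReal.rpow_one]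
    refine h2.trans (le_of_eq ?_)
    rw [ENNReal.mul_rpow_of_nonneg _ _ hp0.le, ENNReal.mul_rpow_of_nonneg _ _ hp0.le,
      ← ENNReal.rpow_mul, ← ENNReal.rpow_mul, ← ENNReal.rpow_mul]
    rw [show (1 - 2 / (d : ℝ)) * (1 / 2 * p) = 1 - b by rw [hb, hp]; field_simp; ring,
      show 1 / 2 * p = b by rw [hb]; ring]
    ring
  have h4 : Q ^ b ≤ C0 * s ^ p * G ^ b := by
    have hne : Q ^ (1 - b) ≠ 0 := by
      simp [ENNReal.rpow_eq_zero_iff, hQ0, hQtop]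
    have hnt : Q ^ (1 - b) ≠ ⊤ := by
      simp [ENNReal.rpow_eq_top_iff, hQ0, hQtop]
    exact (ENNReal.mul_le_mul_iff_right hne hnt).1 h3
  calc Q = (Q ^ b) ^ (1 / b) := by
        rw [← ENNReal.rpow_mul, mul_one_div_cancel hb0.ne', ENNReal.rpow_one]
    _ ≤ (C0 * s ^ p * G ^ b) ^ (1 / b) := by gcongr
    _ = _ := by
        rw [ENNReal.mul_rpow_of_nonneg _ _ (by positivity), ← ENNReal.rpow_mul,
          mul_one_div_cancel hb0.ne', ENNReal.rpow_one,
          ← ENNReal.coe_rpow_of_nonneg s hp0.le, ← ENNReal.coe_mul,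
          ← ENNReal.coe_rpow_of_nonneg _ (by positivity)]

theorem sup_le_one_dim (v : EuclideanSpace ℝ (Fin 1) → ℝ) (hv : ContDiff ℝ 1 v)
    (h2v : HasCompactSupport v) (x : EuclideanSpace ℝ (Fin 1)) :
    ‖v x‖ₑ ≤ ∫⁻ y, ‖fderiv ℝ v y‖ₑ := by
  let L : ℝ → EuclideanSpace ℝ (Fin 1) := fun t => WithLp.toLp 2 (fun _ => t)
  have hL : ∀ t, L t = t • EuclideanSpace.single 0 (1 : ℝ) := fun t => by
    ext i
    fin_cases i
    simp [L]
  have hLd : ∀ t, HasDerivAt L (EuclideanSpace.single 0 (1 : ℝ)) t := fun t => by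
    rw [show L = fun t => t • EuclideanSpace.single 0 (1 : ℝ) from funext hL]
    simpa using (hasDerivAt_id t).smul_const (EuclideanSpace.single (0 : Fin 1) (1 : ℝ))
  have hLc : ContDiff ℝ 1 L := by
    rw [show L = fun t => t • EuclideanSpace.single 0 (1 : ℝ) from funext hL]
    fun_prop
  have hLi : Isometry L := by
    refine Isometry.of_dist_eq fun a b => ?_
    rw [EuclideanSpace.dist_eq]
    simp [L, Real.sqrt_sq]
  have hmp : MeasurePreserving L volume volume :=
    (PiLp.volume_preserving_toLp (Fin 1)).comp
      (volume_preserving_funUnique (Fin 1) ℝ).symm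
  have hx : L (x 0) = x := by
    ext i
    fin_cases i
    simp [L]
  have h1 : ContDiff ℝ 1 (v ∘ L) := hv.comp hLc
  have h2 : HasCompactSupport (v ∘ L) := h2v.comp_isClosedEmbedding hLi.isClosedEmbedding
  calc ‖v x‖ₑ = ‖(v ∘ L) (x 0)‖ₑ := by simp [hx]
    _ ≤ ∫⁻ t in Set.Iic (x 0), ‖deriv (v ∘ L) t‖ₑ :=
        HasCompactSupport.enorm_le_lintegral_Ici_deriv h1 h2 _
    _ ≤ ∫⁻ t, ‖deriv (v ∘ L) t‖ₑ := lintegral_mono' Measure.restrict_le_self le_rfl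
    _ ≤ ∫⁻ t, ‖fderiv ℝ v (L t)‖ₑ := by
        refine lintegral_mono fun t => ?_
        have := ((hv.differentiable one_ne_zero (L t)).hasFDerivAt.comp_hasDerivAt t (hLd t)).deriv
        rw [this]
        refine (ContinuousLinearMap.le_opENorm _ _).trans ?_
        simp [enorm_eq_nnnorm]
    _ = ∫⁻ y, ‖fderiv ℝ v y‖ₑ :=
        hmp.lintegral_comp (hv.continuous_fderiv one_ne_zero).enorm.measurable

theorem gn_one : ∃ C : ℝ≥0, ∀ u : EuclideanSpace ℝ (Fin 1) → ℂ,
    ContDiff ℝ 1 u → HasCompactSupport u → (∫⁻ x, ‖u x‖ₑ ^ (2 : ℝ)) = 1 →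
    ∫⁻ x, ‖u x‖ₑ ^ (2 + 4 / ((1 : ℕ) : ℝ)) ≤ C * ∫⁻ x, ‖fderiv ℝ u x‖ₑ ^ (2 : ℝ) := by
  refine ⟨4, fun u hu h2u hn => ?_⟩
  have hm : Measurable fun x => ‖u x‖ₑ := hu.continuous.enorm.measurable
  set G := ∫⁻ x, ‖fderiv ℝ u x‖ₑ ^ (2 : ℝ) with hG
  have hsup : ∀ x, ‖u x‖ₑ ^ (2 : ℝ) ≤ 2 * G ^ (1 / 2 : ℝ) := fun x => by
    have h1 := sup_le_one_dim (fun x => ‖u x‖ ^ (2 : ℝ)) (hu.norm_rpow (by norm_num))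
      (rpow_compactSupport h2u (by norm_num)) x
    have h2 := lintegral_fderiv_rpow_le u hu 2 (by norm_num)
    rw [enorm_rpow_norm _ (by norm_num)] at h1
    refine h1.trans (h2.trans ?_)
    have e : 2 * (((2 : ℝ≥0) : ℝ) - 1) = 2 := by norm_num
    rw [e, hn, ENNReal.one_rpow, one_mul]
    rfl
  calc ∫⁻ x, ‖u x‖ₑ ^ (2 + 4 / ((1 : ℕ) : ℝ))
      = ∫⁻ x, (‖u x‖ₑ ^ (2 : ℝ)) ^ (2 : ℝ) * ‖u x‖ₑ ^ (2 : ℝ) := by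
        refine lintegral_congr fun x => ?_
        rw [← ENNReal.rpow_mul, ← ENNReal.rpow_add_of_nonneg] <;> norm_num
    _ ≤ ∫⁻ x, (2 * G ^ (1 / 2 : ℝ)) ^ (2 : ℝ) * ‖u x‖ₑ ^ (2 : ℝ) := by
        refine lintegral_mono fun x => ?_
        gcongr
        exact hsup x
    _ = (2 * G ^ (1 / 2 : ℝ)) ^ (2 : ℝ) := by
        rw [lintegral_const_mul _ (by fun_prop), hn, mul_one]
    _ = _ := by
        rw [ENNReal.mul_rpow_of_nonneg _ _ (by norm_num), ← ENNReal.rpow_mul]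
        norm_num

theorem gn_real (d : ℕ) (hd : 1 ≤ d) : ∃ C : ℝ, 0 < C ∧ ∀ u : EuclideanSpace ℝ (Fin d) → ℂ,
    ContDiff ℝ 1 u → HasCompactSupport u → (∫ x, ‖u x‖ ^ 2) = 1 →
    ∫ x, ‖u x‖ ^ (2 + 4 / (d : ℝ)) ≤ C * ∫ x, gradSq u x := by
  obtain ⟨C, hC⟩ : ∃ C : ℝ≥0, ∀ u : EuclideanSpace ℝ (Fin d) → ℂ,
    ContDiff ℝ 1 u → HasCompactSupport u → (∫⁻ x, ‖u x‖ₑ ^ (2 : ℝ)) = 1 →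
    ∫⁻ x, ‖u x‖ₑ ^ (2 + 4 / (d : ℝ)) ≤ C * ∫⁻ x, ‖fderiv ℝ u x‖ₑ ^ (2 : ℝ) := by
    rcases hd.eq_or_lt with rfl | h
    · exact gn_one
    · exact gn_two_le d h
  refine ⟨C + 1, by positivity, fun u hu h2u hn => ?_⟩
  have hcd := hu.continuous_fderiv one_ne_zero
  have hg0 : ∀ x, 0 ≤ gradSq u x := fun x => Finset.sum_nonneg fun i _ => by positivity
  have hgi : Integrable (gradSq u) := by
    refine Continuous.integrable_of_hasCompactSupport ?_ ?_
    · unfold gradSq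
      fun_prop
    · exact (h2u.fderiv ℝ).comp_left
        (g := fun D : EuclideanSpace ℝ (Fin d) →L[ℝ] ℂ =>
          ∑ i : Fin d, ‖D (EuclideanSpace.single i 1)‖ ^ 2) (by simp)
  have hn' : (∫⁻ x, ‖u x‖ₑ ^ (2 : ℝ)) = 1 := by
    rw [← lintegral_ofReal_rpow hu h2u (by norm_num)]
    simp [hn]
  have hI : 0 ≤ ∫ x, gradSq u x := integral_nonneg hg0
  have h := hC u hu h2u hn'
  rw [← lintegral_ofReal_rpow hu h2u (by positivity)] at h
  have h2 : ∫⁻ x, ‖fderiv ℝ u x‖ₑ ^ (2 : ℝ) ≤ ENNReal.ofReal (∫ x, gradSq u x) := by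
    rw [ofReal_integral_eq_lintegral_ofReal hgi (Filter.Eventually.of_forall hg0)]
    refine lintegral_mono fun x => ?_
    rw [← ofReal_norm, ENNReal.ofReal_rpow_of_nonneg (norm_nonneg _) (by norm_num)]
    refine ENNReal.ofReal_le_ofReal ?_
    simpa using opnorm_sq_le_gradSq u x
  have h3 : ENNReal.ofReal (∫ x, ‖u x‖ ^ (2 + 4 / (d : ℝ))) ≤
      ENNReal.ofReal (C * ∫ x, gradSq u x) := by
    rw [ENNReal.ofReal_mul C.coe_nonneg]
    refine h.trans ?_
    rw [ENNReal.ofReal_coe_nnreal]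
    gcongr
  rw [ENNReal.ofReal_le_ofReal_iff (by positivity)] at h3
  linarith

/-- Kinetic energy bound for **normalized** (not necessarily orthogonal) families:
`Σₙ ∫ |∇uₙ|² ≥ (K/N^{2/d}) ∫ (Σₙ |uₙ|²)^{1+2/d}`. -/
theorem kinetic_bound_normalized (d : ℕ) (hd : 1 ≤ d) :
    ∃ K : ℝ, 0 < K ∧
      ∀ (N : ℕ), 1 ≤ N →
      ∀ u : Fin N → EuclideanSpace ℝ (Fin d) → ℂ,
        (∀ n, ContDiff ℝ 1 (u n)) →
        (∀ n, HasCompactSupport (u n)) →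
        (∀ n, (∫ x, ‖u n x‖ ^ 2) = 1) →
        ∑ n, ∫ x, gradSq (u n) x
          ≥ (K / (N : ℝ) ^ (2 / (d : ℝ))) *
              ∫ x, (∑ n, ‖u n x‖ ^ 2) ^ (1 + 2 / (d : ℝ)) := by
  obtain ⟨C, hC0, hC⟩ := gn_real d hd
  refine ⟨1 / C, by positivity, fun N hN u hu h2u hn => ?_⟩
  have hN0 : (0 : ℝ) < N := by exact_mod_cast hN
  have hq : (0 : ℝ) < 2 + 4 / (d : ℝ) := by positivity
  have hint : ∀ n, Integrable (fun x => ‖u n x‖ ^ (2 + 4 / (d : ℝ))) := fun n =>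
    ((hu n).continuous.norm.rpow_const fun _ => Or.inr hq.le).integrable_of_hasCompactSupport
      (rpow_compactSupport (h2u n) hq)
  have key : ∫ x, (∑ n, ‖u n x‖ ^ 2) ^ (1 + 2 / (d : ℝ)) ≤
      (N : ℝ) ^ (2 / (d : ℝ)) * ∑ n, ∫ x, ‖u n x‖ ^ (2 + 4 / (d : ℝ)) := by
    rw [← integral_finsetSum _ fun n _ => hint n, ← integral_const_mul]
    refine integral_mono_of_nonneg (Filter.Eventually.of_forall fun x => ?_)
      ((integrable_finsetSum _ fun n _ => hint n).const_mul _)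
      (Filter.Eventually.of_forall fun x => ?_)
    · have : 0 ≤ ∑ n, ‖u n x‖ ^ 2 := Finset.sum_nonneg fun i _ => by positivity
      simp only [Pi.zero_apply]
      positivity
    · have := Real.rpow_sum_le_const_mul_sum_rpow_of_nonneg (s := Finset.univ)
        (f := fun n => ‖u n x‖ ^ 2) (p := 1 + 2 / (d : ℝ))
        (by have : (0 : ℝ) ≤ 2 / d := by positivity
            linarith) (fun i _ => by positivity)
      refine this.trans (le_of_eq ?_)
      simp only [Finset.card_univ, Fintype.card_fin, add_sub_cancel_left]
      congr 1
      refine Finset.sum_congr rfl fun n _ => ?_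
      rw [← Real.rpow_natCast, ← Real.rpow_mul (norm_nonneg _)]
      congr 1
      push_cast
      ring
  have h2 : ∑ n, ∫ x, ‖u n x‖ ^ (2 + 4 / (d : ℝ)) ≤ C * ∑ n, ∫ x, gradSq (u n) x := by
    rw [Finset.mul_sum]
    exact Finset.sum_le_sum fun n _ => hC (u n) (hu n) (h2u n) (hn n)
  have hNp : 0 < (N : ℝ) ^ (2 / (d : ℝ)) := by positivity
  calc 1 / C / (N : ℝ) ^ (2 / (d : ℝ)) * ∫ x, (∑ n, ‖u n x‖ ^ 2) ^ (1 + 2 / (d : ℝ))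
      ≤ 1 / C / (N : ℝ) ^ (2 / (d : ℝ)) *
          ((N : ℝ) ^ (2 / (d : ℝ)) * (C * ∑ n, ∫ x, gradSq (u n) x)) := by
        gcongr
        refine key.trans ?_
        gcongr
    _ = _ := by field_simp
end

section
/- (Local exclusion principle) There exists a constant C_d > 0 depending only on the dimension d such that: for every open ball B ⊂ ℝ^d, every finite family u_1, …, u_N of continuously differentiable functions from ℝ^d to ℂ whose restrictions to B are orthonormal in L²(B), and every choice of coefficients λ_1, …, λ_N ∈ [0,1], one has Σ_{n=1}^N λ_n ∫_B |∇u_n(x)|² dx ≥ (1/(C_d |B|^{2/d})) · (∫_B ρ(x) dx − 1), where ρ(x) = Σ_{n=1}^N λ_n |u_n(x)|² and |B| denotes the Lebesgue measure of B. -/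
open MeasureTheory
open scoped BigOperators

open Set in
lemma le_pt {d : ℕ} (u : EuclideanSpace ℝ (Fin d) → ℂ) (hu : ContDiff ℝ 1 u)
    (x v : EuclideanSpace ℝ (Fin d)) :
    ‖fderiv ℝ u x v‖ ^ 2 ≤ ‖v‖ ^ 2 * gradSq u x := by
  have hv : v = ∑ i, v i • EuclideanSpace.single i (1:ℝ) := by
    ext j
    simp [Finset.sum_apply, Pi.single_apply]
  have h1 : ‖fderiv ℝ u x v‖ ≤ ∑ i, ‖v i‖ * ‖fderiv ℝ u x (EuclideanSpace.single i 1)‖ := by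
    conv_lhs => rw [hv]
    rw [map_sum]
    refine (norm_sum_le _ _).trans (le_of_eq ?_)
    refine Finset.sum_congr rfl fun i _ => ?_
    rw [map_smul, norm_smul]
  calc _ ≤ (∑ i, ‖v i‖ * ‖fderiv ℝ u x (EuclideanSpace.single i 1)‖) ^ 2 := by gcongr
    _ ≤ _ := by
      rw [EuclideanSpace.norm_sq_eq]
      exact Finset.sum_mul_sq_le_sq_mul_sq _ _ _

lemma gradSq_cont {d : ℕ} (u : EuclideanSpace ℝ (Fin d) → ℂ) (hu : ContDiff ℝ 1 u) :
    Continuous (gradSq u) := by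
  have := hu.continuous_fderiv (by simp)
  unfold gradSq
  fun_prop

lemma gradSq_nonneg {d : ℕ} (u : EuclideanSpace ℝ (Fin d) → ℂ) (x) : 0 ≤ gradSq u x := by
  unfold gradSq; positivity

lemma jensen (g : ℝ → ℝ) (hg : Continuous g) :
    (∫ t in (0:ℝ)..1, g t) ^ 2 ≤ ∫ t in (0:ℝ)..1, g t ^ 2 := by
  set I := ∫ t in (0:ℝ)..1, g t with hI
  have h : 0 ≤ ∫ t in (0:ℝ)..1, (g t - I) ^ 2 :=
    intervalIntegral.integral_nonneg (by norm_num) fun t _ => sq_nonneg _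
  have h2 : ∫ t in (0:ℝ)..1, (g t - I) ^ 2 = (∫ t in (0:ℝ)..1, g t ^ 2) - 2 * I * I + I ^ 2 := by
    have : ∀ t, (g t - I) ^ 2 = g t ^ 2 - 2 * I * g t + I ^ 2 := fun t => by ring
    simp_rw [this]
    rw [intervalIntegral.integral_add, intervalIntegral.integral_sub,
      intervalIntegral.integral_const_mul]
    · simp [hI]
    all_goals apply Continuous.intervalIntegrable; fun_prop
  nlinarith

lemma seg_bound {d : ℕ} (u : EuclideanSpace ℝ (Fin d) → ℂ) (hu : ContDiff ℝ 1 u)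
    (x y : EuclideanSpace ℝ (Fin d)) :
    ‖u x - u y‖ ^ 2 ≤ ‖x - y‖ ^ 2 * ∫ t in (0:ℝ)..1, gradSq u (y + t • (x - y)) := by
  have hc := hu.continuous_fderiv (by simp)
  have hgc := gradSq_cont u hu
  have h1 : ∫ t in (0:ℝ)..1, fderiv ℝ u (y + t • (x - y)) (x - y) = u x - u y := by
    have := intervalIntegral.integral_eq_sub_of_hasDerivAt (a := (0:ℝ)) (b := 1)
      (f := fun t : ℝ => u (y + t • (x - y)))
      (f' := fun t : ℝ => fderiv ℝ u (y + t • (x - y)) (x - y)) ?_ ?_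
    · simpa using this
    · intro t _
      have hd := (hu.differentiable (by simp) (y + t • (x - y))).hasFDerivAt
      have hl : HasDerivAt (fun t : ℝ => y + t • (x - y)) (x - y) t := by
        simpa using ((hasDerivAt_id t).smul_const (x - y)).const_add y
      exact hd.comp_hasDerivAt t hl
    · apply Continuous.intervalIntegrable; fun_prop
  rw [← h1]
  calc _ ≤ (∫ t in (0:ℝ)..1, ‖fderiv ℝ u (y + t • (x - y)) (x - y)‖) ^ 2 := by
        gcongr
        exact intervalIntegral.norm_integral_le_integral_norm (by norm_num)
    _ ≤ ∫ t in (0:ℝ)..1, ‖fderiv ℝ u (y + t • (x - y)) (x - y)‖ ^ 2 := by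
        apply jensen; fun_prop
    _ ≤ ∫ t in (0:ℝ)..1, ‖x - y‖ ^ 2 * gradSq u (y + t • (x - y)) := by
        apply intervalIntegral.integral_mono_on (by norm_num)
        · apply Continuous.intervalIntegrable; fun_prop
        · apply Continuous.intervalIntegrable; fun_prop
        · intro t _
          exact le_pt u hu _ _
    _ = _ := by rw [intervalIntegral.integral_const_mul]

open scoped ENNReal in
lemma scale_bound {d : ℕ} (c : EuclideanSpace ℝ (Fin d)) (r : ℝ)
    (F : EuclideanSpace ℝ (Fin d) → ℝ≥0∞) (hF : Measurable F)
    (t : ℝ) (ht : 1 / 2 ≤ t) (ht1 : t ≤ 1) (y : EuclideanSpace ℝ (Fin d))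
    (hy : y ∈ Metric.ball c r) :
    ∫⁻ x in Metric.ball c r, F (y + t • (x - y)) ≤
      2 ^ d * ∫⁻ z in Metric.ball c r, F z := by
  have ht0 : 0 < t := by linarith
  set B := Metric.ball c r with hB
  have hBm : MeasurableSet B := measurableSet_ball
  have hG : Measurable (B.indicator F) := hF.indicator hBm
  have hG1 : Measurable fun z => B.indicator F (z + (1 - t) • y) := by fun_prop
  calc ∫⁻ x in B, F (y + t • (x - y))
      ≤ ∫⁻ x in B, B.indicator F (t • x + (1 - t) • y) := by
        apply setLIntegral_mono' hBm
        intro x hx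
        have e : t • x + (1 - t) • y = y + t • (x - y) := by module
        have hm : t • x + (1 - t) • y ∈ B :=
          (convex_ball c r) hx hy ht0.le (by linarith) (by ring)
        rw [Set.indicator_of_mem hm, e]
    _ ≤ ∫⁻ x, B.indicator F (t • x + (1 - t) • y) := setLIntegral_le_lintegral _ _
    _ = ∫⁻ z, B.indicator F (z + (1 - t) • y)
          ∂(Measure.map (fun x : EuclideanSpace ℝ (Fin d) => t • x) volume) := by
        rw [lintegral_map hG1 (by fun_prop)]
    _ = ENNReal.ofReal |(t ^ d)⁻¹| * ∫⁻ z, B.indicator F z := by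
        have := Measure.map_addHaar_smul (volume : Measure (EuclideanSpace ℝ (Fin d))) ht0.ne'
        rw [this, lintegral_smul_measure, lintegral_add_right_eq_self (fun z => B.indicator F z)]
        simp
    _ ≤ _ := by
        rw [lintegral_indicator hBm]
        gcongr
        rw [abs_of_nonneg (by positivity)]
        have : (2:ℝ≥0∞) ^ d = ENNReal.ofReal (2 ^ d) := by
          rw [ENNReal.ofReal_pow (by norm_num)]; simp
        rw [this]
        apply ENNReal.ofReal_le_ofReal
        rw [← inv_pow]
        gcongr
        rw [inv_le_comm₀ ht0 (by norm_num)]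
        linarith

open scoped ENNReal in
lemma pair_bound {d : ℕ} (c : EuclideanSpace ℝ (Fin d)) (r : ℝ)
    (F : EuclideanSpace ℝ (Fin d) → ℝ≥0∞) (hF : Measurable F)
    (t : ℝ) (ht : 0 ≤ t) (ht1 : t ≤ 1) :
    ∫⁻ y in Metric.ball c r, ∫⁻ x in Metric.ball c r, F (y + t • (x - y)) ≤
      volume (Metric.ball c r) * (2 ^ d * ∫⁻ z in Metric.ball c r, F z) := by
  have key : ∀ s : ℝ, 1 / 2 ≤ s → s ≤ 1 →
      ∫⁻ y in Metric.ball c r, ∫⁻ x in Metric.ball c r, F (y + s • (x - y)) ≤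
      volume (Metric.ball c r) * (2 ^ d * ∫⁻ z in Metric.ball c r, F z) := by
    intro s hs hs1
    calc _ ≤ ∫⁻ y in Metric.ball c r, (2 ^ d * ∫⁻ z in Metric.ball c r, F z) :=
          setLIntegral_mono' measurableSet_ball fun y hy =>
            scale_bound c r F hF s hs hs1 y hy
      _ = _ := by rw [setLIntegral_const, mul_comm]
  rcases le_total (1/2) t with h | h
  · exact key t h ht1
  · rw [lintegral_lintegral_swap]
    · convert key (1 - t) (by linarith) (by linarith) using 6
      module
    · apply Measurable.aemeasurable
      simp only [Function.uncurry_def]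
      fun_prop

open scoped ENNReal in
lemma double_bound {d : ℕ} (c : EuclideanSpace ℝ (Fin d)) (r : ℝ) (hr : 0 < r)
    (u : EuclideanSpace ℝ (Fin d) → ℂ) (hu : ContDiff ℝ 1 u) :
    ∫⁻ y in Metric.ball c r, ∫⁻ x in Metric.ball c r, ENNReal.ofReal (‖u x - u y‖ ^ 2) ≤
      ENNReal.ofReal (4 * r ^ 2) * (volume (Metric.ball c r) *
        (2 ^ d * ∫⁻ z in Metric.ball c r, ENNReal.ofReal (gradSq u z))) := by
  have hgc := gradSq_cont u hu
  set F : EuclideanSpace ℝ (Fin d) → ℝ≥0∞ := fun z => ENNReal.ofReal (gradSq u z) with hFd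
  have hF : Measurable F := hgc.measurable.ennreal_ofReal
  have h1 : ∀ y ∈ Metric.ball c r, ∀ x ∈ Metric.ball c r, ENNReal.ofReal (‖u x - u y‖ ^ 2) ≤
      ENNReal.ofReal (4 * r ^ 2) * ∫⁻ t in Set.Ioc (0:ℝ) 1, F (y + t • (x - y)) := by
    intro y hy x hx
    have hci : IntegrableOn (fun t : ℝ => gradSq u (y + t • (x - y))) (Set.Ioc 0 1) := by
      apply Continuous.integrableOn_Ioc; fun_prop
    have e : ENNReal.ofReal (∫ t in (0:ℝ)..1, gradSq u (y + t • (x - y))) =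
        ∫⁻ t in Set.Ioc (0:ℝ) 1, F (y + t • (x - y)) := by
      rw [intervalIntegral.integral_of_le (by norm_num),
        ofReal_integral_eq_lintegral_ofReal hci
          (Filter.Eventually.of_forall fun t => gradSq_nonneg u _)]
    rw [← e, ← ENNReal.ofReal_mul (by positivity)]
    apply ENNReal.ofReal_le_ofReal
    refine (seg_bound u hu x y).trans ?_
    have hn : ‖x - y‖ ≤ 2 * r := by
      rw [← dist_eq_norm]
      have := dist_triangle_right x y c
      rw [Metric.mem_ball] at hx hy
      linarith
    have hn2 : ‖x - y‖ ^ 2 ≤ 4 * r ^ 2 := by nlinarith [norm_nonneg (x - y)]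
    apply mul_le_mul_of_nonneg_right hn2
    exact intervalIntegral.integral_nonneg (by norm_num) fun t _ => gradSq_nonneg u _
  calc _ ≤ ∫⁻ y in Metric.ball c r, ∫⁻ x in Metric.ball c r,
        ENNReal.ofReal (4 * r ^ 2) * ∫⁻ t in Set.Ioc (0:ℝ) 1, F (y + t • (x - y)) :=
        setLIntegral_mono' measurableSet_ball fun y hy =>
          setLIntegral_mono' measurableSet_ball fun x hx => h1 y hy x hx
    _ = ENNReal.ofReal (4 * r ^ 2) * ∫⁻ y in Metric.ball c r, ∫⁻ x in Metric.ball c r,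
        ∫⁻ t in Set.Ioc (0:ℝ) 1, F (y + t • (x - y)) := by
        rw [← lintegral_const_mul' _ _ ENNReal.ofReal_ne_top]
        congr 1; ext y
        rw [← lintegral_const_mul' _ _ ENNReal.ofReal_ne_top]
    _ = ENNReal.ofReal (4 * r ^ 2) * ∫⁻ t in Set.Ioc (0:ℝ) 1, ∫⁻ y in Metric.ball c r,
        ∫⁻ x in Metric.ball c r, F (y + t • (x - y)) := by
        congr 1
        have e1 : ∀ y, ∫⁻ x in Metric.ball c r, ∫⁻ t in Set.Ioc (0:ℝ) 1, F (y + t • (x - y)) =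
            ∫⁻ t in Set.Ioc (0:ℝ) 1, ∫⁻ x in Metric.ball c r, F (y + t • (x - y)) := by
          intro y
          rw [lintegral_lintegral_swap]
          apply Measurable.aemeasurable
          simp only [Function.uncurry_def]
          fun_prop
        simp_rw [e1]
        rw [lintegral_lintegral_swap]
        apply Measurable.aemeasurable
        simp only [Function.uncurry_def]
        apply Measurable.lintegral_prod_right'
          (f := fun p : (EuclideanSpace ℝ (Fin d) × ℝ) × EuclideanSpace ℝ (Fin d) =>
            F (p.1.1 + p.1.2 • (p.2 - p.1.1)))
        fun_prop
    _ ≤ ENNReal.ofReal (4 * r ^ 2) * ∫⁻ t in Set.Ioc (0:ℝ) 1, (volume (Metric.ball c r) *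
        (2 ^ d * ∫⁻ z in Metric.ball c r, F z)) := by
        refine mul_le_mul_right ?_ _
        exact setLIntegral_mono' measurableSet_Ioc fun t ht =>
          pair_bound c r F hF t ht.1.le ht.2
    _ = _ := by simp

lemma cont_int {d : ℕ} {E : Type*} [NormedAddCommGroup E]
    (c : EuclideanSpace ℝ (Fin d)) (r : ℝ)
    (f : EuclideanSpace ℝ (Fin d) → E) (hf : Continuous f) :
    IntegrableOn f (Metric.ball c r) :=
  (hf.continuousOn.integrableOn_compact (isCompact_closedBall c r)).mono_set
    Metric.ball_subset_closedBall

lemma var_min {d : ℕ} (c : EuclideanSpace ℝ (Fin d)) (r : ℝ) (hr : 0 < r)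
    (u : EuclideanSpace ℝ (Fin d) → ℂ) (hu : Continuous u) (a : ℂ) :
    (∫ x in Metric.ball c r, ‖u x‖ ^ 2) -
      ‖∫ x in Metric.ball c r, u x‖ ^ 2 / (volume (Metric.ball c r)).toReal ≤
    ∫ x in Metric.ball c r, ‖u x - a‖ ^ 2 := by
  set V := (volume (Metric.ball c r)).toReal with hV
  have hVpos : 0 < V := ENNReal.toReal_pos (Metric.measure_ball_pos _ _ hr).ne'
    measure_ball_lt_top.ne
  set m := ∫ x in Metric.ball c r, u x with hm
  have e : ∀ x, ‖u x - a‖ ^ 2 = ‖u x‖ ^ 2 - 2 * (u x * (starRingEnd ℂ) a).re + ‖a‖ ^ 2 := by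
    intro x
    simp only [← Complex.normSq_eq_norm_sq, Complex.normSq_sub]
    ring
  have h2 : ∫ x in Metric.ball c r, (u x * (starRingEnd ℂ) a).re = (m * (starRingEnd ℂ) a).re := by
    have := integral_re (𝕜 := ℂ) (cont_int c r (fun x => u x * (starRingEnd ℂ) a) (by fun_prop))
    simp only [RCLike.re_to_complex] at this
    rw [this, integral_mul_const]
  have h3 : ∫ x in Metric.ball c r, ‖u x - a‖ ^ 2 =
      (∫ x in Metric.ball c r, ‖u x‖ ^ 2) - 2 * (m * (starRingEnd ℂ) a).re + V * ‖a‖ ^ 2 := by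
    simp_rw [e]
    rw [integral_add, integral_sub, integral_const_mul, h2]
    · simp [hV, Measure.real]
    · exact cont_int c r _ (by fun_prop)
    · exact cont_int c r _ (by fun_prop)
    · exact cont_int c r _ (by fun_prop)
    · exact cont_int c r _ (by fun_prop)
  rw [h3]
  have h4 : (m * (starRingEnd ℂ) a).re ≤ ‖m‖ * ‖a‖ := by
    refine (Complex.re_le_norm _).trans ?_
    simp
  have h5 : 2 * (‖m‖ * ‖a‖) ≤ ‖m‖ ^ 2 / V + V * ‖a‖ ^ 2 := by
    have : ‖m‖ ^ 2 / V + V * ‖a‖ ^ 2 - 2 * (‖m‖ * ‖a‖) = (‖m‖ - V * ‖a‖) ^ 2 / V := by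
      field_simp
      ring
    have h6 : 0 ≤ (‖m‖ - V * ‖a‖) ^ 2 / V := by positivity
    linarith
  linarith

open scoped ENNReal in
lemma poincare {d : ℕ} (c : EuclideanSpace ℝ (Fin d)) (r : ℝ) (hr : 0 < r)
    (u : EuclideanSpace ℝ (Fin d) → ℂ) (hu : ContDiff ℝ 1 u) :
    (∫ x in Metric.ball c r, ‖u x‖ ^ 2) -
      ‖∫ x in Metric.ball c r, u x‖ ^ 2 / (volume (Metric.ball c r)).toReal ≤
    4 * r ^ 2 * 2 ^ d * ∫ x in Metric.ball c r, gradSq u x := by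
  have hgc := gradSq_cont u hu
  have hc := hu.continuous
  have hv0 : volume (Metric.ball c r) ≠ 0 := (Metric.measure_ball_pos _ _ hr).ne'
  have hvt : volume (Metric.ball c r) ≠ ∞ := measure_ball_lt_top.ne
  set W := (∫ x in Metric.ball c r, ‖u x‖ ^ 2) -
      ‖∫ x in Metric.ball c r, u x‖ ^ 2 / (volume (Metric.ball c r)).toReal with hW
  have hG : 0 ≤ ∫ x in Metric.ball c r, gradSq u x := integral_nonneg fun x => gradSq_nonneg u x
  have h1 : volume (Metric.ball c r) * ENNReal.ofReal W ≤
      ∫⁻ y in Metric.ball c r, ∫⁻ x in Metric.ball c r, ENNReal.ofReal (‖u x - u y‖ ^ 2) := by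
    rw [mul_comm, ← setLIntegral_const]
    apply setLIntegral_mono' measurableSet_ball
    intro y _
    rw [← ofReal_integral_eq_lintegral_ofReal (cont_int c r _ (by fun_prop))
      (Filter.Eventually.of_forall fun x => by positivity)]
    exact ENNReal.ofReal_le_ofReal (var_min c r hr u hc (u y))
  have h2 := h1.trans (double_bound c r hr u hu)
  rw [← ofReal_integral_eq_lintegral_ofReal (cont_int c r _ hgc)
      (Filter.Eventually.of_forall fun x => gradSq_nonneg u x)] at h2
  rw [mul_left_comm, ENNReal.mul_le_mul_iff_right hv0 hvt] at h2
  have h3 : (2:ℝ≥0∞) ^ d = ENNReal.ofReal (2 ^ d) := by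
    rw [ENNReal.ofReal_pow (by norm_num)]; simp
  rw [h3, ← ENNReal.ofReal_mul (by positivity), ← ENNReal.ofReal_mul (by positivity),
    ENNReal.ofReal_le_ofReal_iff (by positivity)] at h2
  linarith

lemma bessel {d : ℕ} (c : EuclideanSpace ℝ (Fin d)) (r : ℝ)
    (N : ℕ) (u : Fin N → EuclideanSpace ℝ (Fin d) → ℂ) (hu : ∀ n, Continuous (u n))
    (ho : ∀ m n : Fin N, ∫ x in Metric.ball c r, u m x * (starRingEnd ℂ) (u n x)
            = if m = n then 1 else 0) :
    ∑ n, ‖∫ x in Metric.ball c r, u n x‖ ^ 2 ≤ (volume (Metric.ball c r)).toReal := by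
  set μ := (volume : Measure (EuclideanSpace ℝ (Fin d))).restrict (Metric.ball c r) with hμ
  have hfin : IsFiniteMeasure μ := ⟨by rw [hμ]; simpa using measure_ball_lt_top⟩
  have hL : ∀ n, MemLp (u n) 2 μ := fun n => by
    rw [memLp_two_iff_integrable_sq_norm (hu n).aestronglyMeasurable]
    exact cont_int c r _ (by have := hu n; fun_prop)
  have h1L : MemLp (fun _ : EuclideanSpace ℝ (Fin d) => (1:ℂ)) 2 μ := memLp_const 1
  let v : Fin N → Lp ℂ 2 μ := fun n => (hL n).toLp
  have hinner : ∀ {f g : EuclideanSpace ℝ (Fin d) → ℂ} (hf : MemLp f 2 μ) (hg : MemLp g 2 μ),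
      inner ℂ hf.toLp hg.toLp = ∫ x, g x * (starRingEnd ℂ) (f x) ∂μ := by
    intro f g hf hg
    rw [L2.inner_def]
    apply integral_congr_ae
    filter_upwards [hf.coeFn_toLp, hg.coeFn_toLp] with x h1 h2
    rw [h1, h2]
    simp
  have hv : Orthonormal ℂ v := by
    rw [orthonormal_iff_ite]
    intro i j
    rw [hinner (hL i) (hL j), ho j i]
    simp [eq_comm]
  have := hv.sum_inner_products_le h1L.toLp (s := Finset.univ)
  have e1 : ‖h1L.toLp‖ ^ 2 = (volume (Metric.ball c r)).toReal := by
    have h := inner_self_eq_norm_sq_to_K (𝕜 := ℂ) h1L.toLp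
    rw [hinner h1L h1L] at h
    simp only [map_one, mul_one, integral_const, hμ] at h
    simp [Measure.real] at h
    exact_mod_cast h.symm
  rw [e1] at this
  refine le_trans (le_of_eq ?_) this
  refine Finset.sum_congr rfl fun n _ => ?_
  rw [norm_inner_symm, hinner h1L (hL n)]
  simp

/-- **Local exclusion principle**: for a finite family of `C¹` functions, orthonormal
in `L²(B)` on an open ball `B`, with coefficients `λₙ ∈ [0,1]`,
`Σₙ λₙ ∫_B |∇uₙ|² ≥ (C_d |B|^{2/d})⁻¹ (∫_B ρ − 1)`. -/
theorem local_exclusion (d : ℕ) (hd : 1 ≤ d) :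
    ∃ C : ℝ, 0 < C ∧
      ∀ (c : EuclideanSpace ℝ (Fin d)) (r : ℝ), 0 < r →
      ∀ (N : ℕ) (u : Fin N → EuclideanSpace ℝ (Fin d) → ℂ) (lam : Fin N → ℝ),
        (∀ n, ContDiff ℝ 1 (u n)) →
        (∀ m n : Fin N,
          ∫ x in Metric.ball c r, u m x * (starRingEnd ℂ) (u n x)
            = if m = n then 1 else 0) →
        (∀ n, 0 ≤ lam n ∧ lam n ≤ 1) →
        ∑ n, lam n * ∫ x in Metric.ball c r, gradSq (u n) x
          ≥ (1 / (C * (volume (Metric.ball c r)).toReal ^ (2 / (d : ℝ)))) *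
              ((∫ x in Metric.ball c r, ∑ n, lam n * ‖u n x‖ ^ 2) - 1) := by
  have : NeZero d := ⟨by omega⟩
  set ω := (volume (Metric.ball (0 : EuclideanSpace ℝ (Fin d)) 1)).toReal with hω
  have hω0 : 0 < ω := ENNReal.toReal_pos (Metric.measure_ball_pos _ _ one_pos).ne'
    measure_ball_lt_top.ne
  refine ⟨4 * 2 ^ d / ω ^ (2 / (d:ℝ)), by positivity, ?_⟩
  intro c r hr N u lam hu ho hlam
  set V := (volume (Metric.ball c r)).toReal with hV
  have hV0 : 0 < V := ENNReal.toReal_pos (Metric.measure_ball_pos _ _ hr).ne'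
    measure_ball_lt_top.ne
  have hVr : V = r ^ d * ω := by
    rw [hV, Measure.addHaar_ball_of_pos _ _ hr, ENNReal.toReal_mul,
      ENNReal.toReal_ofReal (by positivity)]
    simp [hω]
  have hVp : V ^ (2 / (d:ℝ)) = r ^ 2 * ω ^ (2 / (d:ℝ)) := by
    rw [hVr, Real.mul_rpow (by positivity) hω0.le, ← Real.rpow_natCast r d,
      ← Real.rpow_mul hr.le]
    have hd0 : (d:ℝ) ≠ 0 := by positivity
    rw [mul_div_cancel₀ _ hd0]
    norm_num
  have hK : 4 * 2 ^ d / ω ^ (2 / (d:ℝ)) * V ^ (2 / (d:ℝ)) = 4 * r ^ 2 * 2 ^ d := by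
    rw [hVp]
    have : 0 < ω ^ (2 / (d:ℝ)) := by positivity
    field_simp
  rw [hK, ge_iff_le, one_div, inv_mul_le_iff₀ (by positivity), Finset.mul_sum]
  have hc : ∀ n, Continuous (u n) := fun n => (hu n).continuous
  rw [integral_finsetSum _ (fun n _ => cont_int c r _ (by have := hc n; fun_prop))]
  have hb := bessel c r N u hc ho
  have hb2 : ∑ n, lam n * (‖∫ x in Metric.ball c r, u n x‖ ^ 2 / V) ≤ 1 := by
    calc _ ≤ ∑ n, ‖∫ x in Metric.ball c r, u n x‖ ^ 2 / V := by
          refine Finset.sum_le_sum fun n _ => ?_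
          exact mul_le_of_le_one_left (by positivity) (hlam n).2
      _ ≤ 1 := by
          rw [← Finset.sum_div, div_le_one hV0]
          exact hb
  have hs : ∑ n, lam n * ((∫ x in Metric.ball c r, ‖u n x‖ ^ 2) -
      ‖∫ x in Metric.ball c r, u n x‖ ^ 2 / V) ≤
      ∑ n, 4 * r ^ 2 * 2 ^ d * (lam n * ∫ x in Metric.ball c r, gradSq (u n) x) := by
    refine Finset.sum_le_sum fun n _ => ?_
    rw [mul_left_comm]
    exact mul_le_mul_of_nonneg_left (poincare c r hr (u n) (hu n)) (hlam n).1
  simp_rw [mul_sub, Finset.sum_sub_distrib] at hs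
  simp_rw [integral_const_mul]
  linarith
end

section
/- For every integer d ≥ 1 there exists a constant K > 0 depending only on d such that: for every finite family u_1, …, u_N of continuously differentiable, compactly supported functions from ℝ^d to ℂ and every choice of coefficients λ_1, …, λ_N ≥ 0 with ∫_{ℝ^d} ρ > 0, where ρ(x) = Σ_{n=1}^N λ_n |u_n(x)|², one has Σ_{n=1}^N λ_n ∫_{ℝ^d} |∇u_n(x)|² dx ≥ K (∫_{ℝ^d} ρ(x) dx)^{−2/d} ∫_{ℝ^d} ρ(x)^{1+2/d} dx. (No orthogonality is required; this combines the Hoffmann-Ostenhof inequality with the Sobolev-type uncertainty principle applied to √ρ.) -/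
open MeasureTheory
open scoped BigOperators

open scoped ENNReal NNReal

/-- Cauchy-Schwarz bound for the derivative of `‖U‖²`. -/
lemma kb_fderiv_sq {E F : Type} [NormedAddCommGroup E] [NormedSpace ℝ E] [MeasurableSpace E]
    [BorelSpace E] (μ : Measure E) [NormedAddCommGroup F] [InnerProductSpace ℝ F]
    (U : E → F) (hU : ContDiff ℝ 1 U) :
    ∫⁻ x, ‖fderiv ℝ (fun y => ‖U y‖ ^ 2) x‖ₑ ∂μ ≤
      2 * ((∫⁻ x, ‖U x‖ₑ ^ (2 : ℝ) ∂μ) ^ (1 / 2 : ℝ) *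
        (∫⁻ x, ‖fderiv ℝ U x‖ₑ ^ (2 : ℝ) ∂μ) ^ (1 / 2 : ℝ)) := by
  have hm1 : Measurable fun x => ‖U x‖ₑ := (hU.continuous.enorm).measurable
  have hm2 : Measurable fun x => ‖fderiv ℝ U x‖ₑ :=
    ((hU.continuous_fderiv one_ne_zero).enorm).measurable
  have hb : ∀ x, ‖fderiv ℝ (fun y => ‖U y‖ ^ 2) x‖ₑ ≤ 2 * (‖U x‖ₑ * ‖fderiv ℝ U x‖ₑ) := by
    intro x
    have h := ((hU.differentiable one_ne_zero x).hasFDerivAt).norm_sq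
    rw [h.fderiv]
    have h1 : ‖(2 : ℕ) • (innerSL ℝ (U x)).comp (fderiv ℝ U x)‖ ≤
        2 * (‖U x‖ * ‖fderiv ℝ U x‖) := by
      rw [← Nat.cast_smul_eq_nsmul ℝ, norm_smul]
      have := (innerSL ℝ (U x)).opNorm_comp_le (fderiv ℝ U x)
      rw [innerSL_apply_norm] at this
      simpa using this
    have h2 := ENNReal.ofReal_le_ofReal h1
    rw [ENNReal.ofReal_mul (by norm_num), ENNReal.ofReal_mul (norm_nonneg _)] at h2
    simpa only [ofReal_norm, ENNReal.ofReal_ofNat] using h2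
  calc _ ≤ ∫⁻ x, 2 * (‖U x‖ₑ * ‖fderiv ℝ U x‖ₑ) ∂μ := lintegral_mono hb
    _ = 2 * ∫⁻ x, (‖U x‖ₑ * ‖fderiv ℝ U x‖ₑ) ∂μ := by
        rw [lintegral_const_mul _ (by fun_prop)]
    _ ≤ _ := by
        gcongr
        exact ENNReal.lintegral_mul_le_Lp_mul_Lq μ
          (Real.holderConjugate_iff.mpr ⟨by norm_num, by norm_num⟩)
          hm1.aemeasurable hm2.aemeasurable

/-- The Sobolev-type inequality, dimension at least 3. -/
lemma kb_core_ge3 (d : ℕ) (hd : 3 ≤ d) : ∃ C : ℝ≥0,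
    ∀ (F : Type) [NormedAddCommGroup F] [InnerProductSpace ℝ F]
      (U : EuclideanSpace ℝ (Fin d) → F), ContDiff ℝ 1 U → HasCompactSupport U →
      ∫⁻ x, ‖U x‖ₑ ^ (2 + 4 / (d : ℝ)) ≤
        C * (∫⁻ x, ‖U x‖ₑ ^ (2 : ℝ)) ^ (2 / (d : ℝ)) * ∫⁻ x, ‖fderiv ℝ U x‖ₑ ^ (2 : ℝ) := by
  have hd' : (3 : ℝ) ≤ d := by exact_mod_cast hd
  have hd2 : (0 : ℝ) < d - 2 := by linarith
  have hd0 : (0 : ℝ) < d := by linarith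
  let A : ℝ≥0 := eLpNormLESNormFDerivOfEqInnerConst
    (volume : Measure (EuclideanSpace ℝ (Fin d))) ((2 : ℝ≥0) : ℝ)
  refine ⟨A ^ (2 : ℝ), ?_⟩
  intro F _ _ U hU hc
  have hm1 : Measurable fun x => ‖U x‖ₑ := (hU.continuous.enorm).measurable
  let p' : ℝ≥0 := ⟨2 * d / (d - 2), by positivity⟩
  have hp' : (p' : ℝ) = 2 * d / (d - 2) := rfl
  have hp'0 : p' ≠ 0 := by
    intro h
    have : (p' : ℝ) = 0 := by rw [h]; rfl
    rw [hp'] at this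
    have : 0 < 2 * (d : ℝ) / (d - 2) := by positivity
    linarith
  have key := eLpNorm_le_eLpNorm_fderiv_of_eq_inner
    (volume : Measure (EuclideanSpace ℝ (Fin d))) hU hc (p := 2) (p' := p') (by norm_num)
    (by simp; omega) (by rw [hp']; simp; field_simp)
  have k2 := ENNReal.rpow_le_rpow key (z := 2) (by norm_num)
  rw [ENNReal.mul_rpow_of_nonneg _ _ (by norm_num)] at k2
  have e1 := eLpNorm_nnreal_pow_eq_lintegral (f := U)
    (μ := (volume : Measure (EuclideanSpace ℝ (Fin d)))) hp'0
  have e2 := eLpNorm_nnreal_pow_eq_lintegral (f := fderiv ℝ U)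
    (μ := (volume : Measure (EuclideanSpace ℝ (Fin d)))) (p := 2) (by norm_num)
  have e2' : eLpNorm (fderiv ℝ U) (2 : ℝ≥0) volume ^ (2 : ℝ)
    = ∫⁻ x, ‖fderiv ℝ U x‖ₑ ^ (2 : ℝ) := by simpa using e2
  rw [e2'] at k2
  have e1' : (∫⁻ x, ‖U x‖ₑ ^ (p' : ℝ)) ^ ((d - 2) / d : ℝ) = eLpNorm U p' volume ^ (2 : ℝ) := by
    rw [← e1, ← ENNReal.rpow_mul, hp']
    congr 1
    field_simp
  have hol := ENNReal.lintegral_mul_norm_pow_le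
    (μ := (volume : Measure (EuclideanSpace ℝ (Fin d))))
    (hm1.pow_const (2 : ℝ)).aemeasurable (hm1.pow_const (p' : ℝ)).aemeasurable
    (p := 2 / d) (q := (d - 2) / d) (by positivity) (by positivity) (by field_simp; ring)
  rw [e1'] at hol
  calc ∫⁻ x, ‖U x‖ₑ ^ (2 + 4 / (d : ℝ))
      = ∫⁻ x, (‖U x‖ₑ ^ (2 : ℝ)) ^ (2 / d : ℝ) * (‖U x‖ₑ ^ (p' : ℝ)) ^ ((d - 2) / d : ℝ) := by
        congr 1
        ext x
        rw [← ENNReal.rpow_mul, ← ENNReal.rpow_mul,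
          ← ENNReal.rpow_add_of_nonneg _ _ (by positivity) (by rw [hp']; positivity), hp']
        congr 1
        field_simp
        ring
    _ ≤ _ := hol
    _ ≤ _ := mul_le_mul_right k2 _
    _ = _ := by
        rw [ENNReal.coe_rpow_of_nonneg _ (by norm_num)]
        ring

lemma kb_hcs {E F : Type} [TopologicalSpace E] [NormedAddCommGroup F]
    (U : E → F) (hc : HasCompactSupport U) : HasCompactSupport (fun y => ‖U y‖ ^ 2) :=
  hc.comp_left (g := fun v : F => ‖v‖ ^ 2) (by simp)

lemma kb_enorm_sq {F : Type} [NormedAddCommGroup F] (v : F) (p : ℝ) :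
    ‖(‖v‖ ^ 2 : ℝ)‖ₑ ^ p = ‖v‖ₑ ^ (2 * p) := by
  rw [ENNReal.rpow_mul, enorm_pow, enorm_norm]
  norm_num

lemma kb_core_two : ∃ C : ℝ≥0,
    ∀ (F : Type) [NormedAddCommGroup F] [InnerProductSpace ℝ F]
      (U : EuclideanSpace ℝ (Fin 2) → F), ContDiff ℝ 1 U → HasCompactSupport U →
      ∫⁻ x, ‖U x‖ₑ ^ (2 + 4 / ((2 : ℕ) : ℝ)) ≤
        C * (∫⁻ x, ‖U x‖ₑ ^ (2 : ℝ)) ^ (2 / ((2 : ℕ) : ℝ)) *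
          ∫⁻ x, ‖fderiv ℝ U x‖ₑ ^ (2 : ℝ) := by
  let A : ℝ≥0 := lintegralPowLePowLIntegralFDerivConst
    (volume : Measure (EuclideanSpace ℝ (Fin 2))) 2
  refine ⟨A * 4, ?_⟩
  intro F _ _ U hU hc
  have h := lintegral_pow_le_pow_lintegral_fderiv
    (volume : Measure (EuclideanSpace ℝ (Fin 2))) (u := fun y => ‖U y‖ ^ 2)
    (hU.norm_sq ℝ) (kb_hcs U hc) (p := 2)
    (Real.holderConjugate_iff.mpr ⟨by simp, by simp; norm_num⟩)
  have h2 := ENNReal.rpow_le_rpow (kb_fderiv_sq volume U hU) (z := 2) (by norm_num)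
  rw [ENNReal.mul_rpow_of_nonneg _ _ (by norm_num), ENNReal.mul_rpow_of_nonneg _ _ (by norm_num),
    ← ENNReal.rpow_mul, ← ENNReal.rpow_mul] at h2
  simp only [kb_enorm_sq] at h
  norm_num at h h2 ⊢
  refine h.trans ((mul_le_mul_right h2 _).trans (le_of_eq ?_))
  simp only [A]
  ring

lemma kb_core_one : ∃ C : ℝ≥0,
    ∀ (F : Type) [NormedAddCommGroup F] [InnerProductSpace ℝ F]
      (U : EuclideanSpace ℝ (Fin 1) → F), ContDiff ℝ 1 U → HasCompactSupport U →
      ∫⁻ x, ‖U x‖ₑ ^ (2 + 4 / ((1 : ℕ) : ℝ)) ≤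
        C * (∫⁻ x, ‖U x‖ₑ ^ (2 : ℝ)) ^ (2 / ((1 : ℕ) : ℝ)) *
          ∫⁻ x, ‖fderiv ℝ U x‖ₑ ^ (2 : ℝ) := by
  refine ⟨4, ?_⟩
  intro F _ _ U hU hc
  let e : ℝ ≃ₗᵢ[ℝ] EuclideanSpace ℝ (Fin 1) := (OrthonormalBasis.singleton (Fin 1) ℝ).repr
  have hw : ContDiff ℝ 1 (fun y => ‖U y‖ ^ 2) := hU.norm_sq ℝ
  have hwc := kb_hcs U hc
  have hm1 : Measurable fun x => ‖U x‖ₑ := (hU.continuous.enorm).measurable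
  set J := ∫⁻ x, ‖fderiv ℝ (fun y => ‖U y‖ ^ 2) x‖ₑ with hJ
  have sup : ∀ x, ‖U x‖ₑ ^ (2 : ℝ) ≤ J := by
    intro x
    obtain ⟨t, rfl⟩ := e.surjective x
    have h := HasCompactSupport.enorm_le_lintegral_Ici_deriv
      (f := (fun y => ‖U y‖ ^ 2) ∘ e) (hw.comp e.contDiff)
      (hwc.comp_homeomorph e.toHomeomorph) t
    have e0 : ‖((fun y => ‖U y‖ ^ 2) ∘ e) t‖ₑ = ‖U (e t)‖ₑ ^ (2 : ℝ) := by
      have := kb_enorm_sq (U (e t)) 1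
      simpa using this
    rw [e0] at h
    refine h.trans ((setLIntegral_le_lintegral _ _).trans ?_)
    rw [hJ, ← e.measurePreserving.lintegral_comp
      ((hw.continuous_fderiv one_ne_zero).enorm).measurable]
    refine lintegral_mono fun s => ?_
    have hd : HasDerivAt ((fun y => ‖U y‖ ^ 2) ∘ e)
        (fderiv ℝ (fun y => ‖U y‖ ^ 2) (e s) (e 1)) s := by
      have h1 : HasDerivAt e (e 1) s := by
        simpa using (e.toContinuousLinearEquiv.hasFDerivAt (x := s)).hasDerivAt
      exact ((hw.differentiable one_ne_zero (e s)).hasFDerivAt).comp_hasDerivAt s h1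
    rw [hd.deriv]
    have := (fderiv ℝ (fun y => ‖U y‖ ^ 2) (e s)).le_opENorm (e 1)
    have e1 : ‖e 1‖ₑ = 1 := by
      rw [← ofReal_norm, e.norm_map]; simp
    rwa [e1, mul_one] at this
  have h2 := ENNReal.rpow_le_rpow (kb_fderiv_sq volume U hU) (z := 2) (by norm_num)
  rw [← hJ, ENNReal.mul_rpow_of_nonneg _ _ (by norm_num),
    ENNReal.mul_rpow_of_nonneg _ _ (by norm_num),
    ← ENNReal.rpow_mul, ← ENNReal.rpow_mul] at h2
  calc ∫⁻ x, ‖U x‖ₑ ^ (2 + 4 / ((1 : ℕ) : ℝ))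
      = ∫⁻ x, (‖U x‖ₑ ^ (2 : ℝ)) ^ (2 : ℝ) * ‖U x‖ₑ ^ (2 : ℝ) := by
        congr 1
        ext x
        rw [← ENNReal.rpow_mul, ← ENNReal.rpow_add_of_nonneg _ _ (by norm_num) (by norm_num)]
        norm_num
    _ ≤ ∫⁻ x, J ^ (2 : ℝ) * ‖U x‖ₑ ^ (2 : ℝ) := by
        refine lintegral_mono fun x => ?_
        gcongr
        exact sup x
    _ = J ^ (2 : ℝ) * ∫⁻ x, ‖U x‖ₑ ^ (2 : ℝ) := by
        rw [lintegral_const_mul _ (hm1.pow_const _)]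
    _ ≤ _ := mul_le_mul_left h2 _
    _ = _ := by
        norm_num
        ring

lemma kb_core (d : ℕ) (hd : 1 ≤ d) : ∃ C : ℝ≥0,
    ∀ (F : Type) [NormedAddCommGroup F] [InnerProductSpace ℝ F]
      (U : EuclideanSpace ℝ (Fin d) → F), ContDiff ℝ 1 U → HasCompactSupport U →
      ∫⁻ x, ‖U x‖ₑ ^ (2 + 4 / (d : ℝ)) ≤
        C * (∫⁻ x, ‖U x‖ₑ ^ (2 : ℝ)) ^ (2 / (d : ℝ)) * ∫⁻ x, ‖fderiv ℝ U x‖ₑ ^ (2 : ℝ) := by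
  rcases (by omega : d = 1 ∨ d = 2 ∨ 3 ≤ d) with rfl | rfl | h
  · exact kb_core_one
  · exact kb_core_two
  · exact kb_core_ge3 d h

lemma kb_opnorm {d : ℕ} {F : Type} [NormedAddCommGroup F] [NormedSpace ℝ F]
    (L : EuclideanSpace ℝ (Fin d) →L[ℝ] F) :
    ‖L‖ ^ 2 ≤ ∑ i : Fin d, ‖L (EuclideanSpace.single i 1)‖ ^ 2 := by
  have h : ‖L‖ ≤ Real.sqrt (∑ i : Fin d, ‖L (EuclideanSpace.single i 1)‖ ^ 2) := by
    refine L.opNorm_le_bound (Real.sqrt_nonneg _) fun v => ?_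
    have hv : v = ∑ i, v i • EuclideanSpace.single i (1 : ℝ) := by
      have := (EuclideanSpace.basisFun (Fin d) ℝ).sum_repr v
      simpa using this.symm
    have h1 : ‖L v‖ ≤ ∑ i, ‖L (EuclideanSpace.single i 1)‖ * ‖v i‖ := by
      conv_lhs => rw [hv, map_sum]
      refine (norm_sum_le _ _).trans (Finset.sum_le_sum fun i _ => ?_)
      rw [map_smul, norm_smul, mul_comm]
    refine h1.trans ?_
    rw [EuclideanSpace.norm_eq]
    exact Real.sum_mul_le_sqrt_mul_sqrt _ _ _
  calc ‖L‖ ^ 2 ≤ (Real.sqrt (∑ i : Fin d, ‖L (EuclideanSpace.single i 1)‖ ^ 2)) ^ 2 := by gcongr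
    _ = _ := Real.sq_sqrt (by positivity)

/-- The vector-valued function `(√λₙ uₙ)ₙ`. -/
noncomputable def kbU {d N : ℕ} (u : Fin N → EuclideanSpace ℝ (Fin d) → ℂ) (lam : Fin N → ℝ)
    (x : EuclideanSpace ℝ (Fin d)) : EuclideanSpace ℂ (Fin N) :=
  WithLp.toLp 2 (fun n => Real.sqrt (lam n) • u n x)

lemma kbU_norm_sq {d N : ℕ} (u : Fin N → EuclideanSpace ℝ (Fin d) → ℂ) (lam : Fin N → ℝ)
    (hl : ∀ n, 0 ≤ lam n) (x : EuclideanSpace ℝ (Fin d)) :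
    ‖kbU u lam x‖ ^ 2 = ∑ n, lam n * ‖u n x‖ ^ 2 := by
  rw [EuclideanSpace.norm_sq_eq]
  refine Finset.sum_congr rfl fun n _ => ?_
  simp only [kbU, norm_smul, mul_pow, Real.norm_eq_abs, sq_abs, Real.sq_sqrt (hl n)]

lemma kbU_contDiff {d N : ℕ} (u : Fin N → EuclideanSpace ℝ (Fin d) → ℂ) (lam : Fin N → ℝ)
    (hu : ∀ n, ContDiff ℝ 1 (u n)) : ContDiff ℝ 1 (kbU u lam) := by
  rw [contDiff_piLp]
  intro n
  exact (hu n).const_smul (Real.sqrt (lam n))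

lemma kbU_compact {d N : ℕ} (u : Fin N → EuclideanSpace ℝ (Fin d) → ℂ) (lam : Fin N → ℝ)
    (hc : ∀ n, HasCompactSupport (u n)) : HasCompactSupport (kbU u lam) := by
  refine HasCompactSupport.intro (K := ⋃ n, tsupport (u n)) (isCompact_iUnion hc) ?_
  intro x hx
  simp only [Set.mem_iUnion, not_exists] at hx
  ext n
  simp [kbU, image_eq_zero_of_notMem_tsupport (hx n)]

lemma kbU_fderiv {d N : ℕ} (u : Fin N → EuclideanSpace ℝ (Fin d) → ℂ) (lam : Fin N → ℝ)
    (hu : ∀ n, ContDiff ℝ 1 (u n)) (hl : ∀ n, 0 ≤ lam n) (x : EuclideanSpace ℝ (Fin d)) :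
    ‖fderiv ℝ (kbU u lam) x‖ ^ 2 ≤ ∑ n, lam n * gradSq (u n) x := by
  refine (kb_opnorm _).trans (le_of_eq ?_)
  have hd := ((kbU_contDiff u lam hu).differentiable one_ne_zero x).hasFDerivAt
  have hcomp : ∀ n v, (fderiv ℝ (kbU u lam) x v) n = Real.sqrt (lam n) • fderiv ℝ (u n) x v := by
    intro n v
    have h1 : HasFDerivAt (fun y => kbU u lam y n)
        ((PiLp.proj 2 (fun _ : Fin N => ℂ) n : _ →L[ℝ] ℂ).comp (fderiv ℝ (kbU u lam) x)) x :=
      (PiLp.proj 2 (fun _ : Fin N => ℂ) n : _ →L[ℝ] ℂ).hasFDerivAt.comp x hd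
    have h2 : HasFDerivAt (fun y => kbU u lam y n) (Real.sqrt (lam n) • fderiv ℝ (u n) x) x :=
      ((hu n).differentiable one_ne_zero x).hasFDerivAt.const_smul (Real.sqrt (lam n))
    have := congrArg (fun L => L v) (h1.unique h2)
    simpa using this
  simp only [EuclideanSpace.norm_sq_eq, hcomp, gradSq, Finset.mul_sum]
  rw [Finset.sum_comm]
  refine Finset.sum_congr rfl fun n _ => Finset.sum_congr rfl fun i _ => ?_
  simp only [norm_smul, mul_pow, Real.norm_eq_abs, sq_abs, Real.sq_sqrt (hl n)]

lemma gradSq_integrable {d : ℕ} (f : EuclideanSpace ℝ (Fin d) → ℂ)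
    (hf : ContDiff ℝ 1 f) (hc : HasCompactSupport f) : Integrable (gradSq f) := by
  have h1 : Continuous (gradSq f) := by
    unfold gradSq
    have := hf.continuous_fderiv one_ne_zero
    fun_prop
  refine h1.integrable_of_hasCompactSupport ?_
  exact (hc.fderiv ℝ).comp_left (g := fun L : EuclideanSpace ℝ (Fin d) →L[ℝ] ℂ =>
    ∑ i : Fin d, ‖L (EuclideanSpace.single i 1)‖ ^ 2) (by simp)

theorem kinetic_bound_no_orthogonality (d : ℕ) (hd : 1 ≤ d) :
    ∃ K : ℝ, 0 < K ∧
      ∀ (N : ℕ) (u : Fin N → EuclideanSpace ℝ (Fin d) → ℂ) (lam : Fin N → ℝ),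
        (∀ n, ContDiff ℝ 1 (u n)) →
        (∀ n, HasCompactSupport (u n)) →
        (∀ n, 0 ≤ lam n) →
        0 < (∫ x, ∑ n, lam n * ‖u n x‖ ^ 2) →
        ∑ n, lam n * ∫ x, gradSq (u n) x
          ≥ K * (∫ x, ∑ n, lam n * ‖u n x‖ ^ 2) ^ (-(2 / (d : ℝ))) *
              ∫ x, (∑ n, lam n * ‖u n x‖ ^ 2) ^ (1 + 2 / (d : ℝ)) := by
  obtain ⟨C, hC⟩ := kb_core d hd
  have hd0 : (0 : ℝ) < d := by exact_mod_cast hd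
  refine ⟨1 / (C + 1), by positivity, ?_⟩
  intro N u lam hu hc hl hpos
  have hU := kbU_contDiff u lam hu
  have hUc := kbU_compact u lam hc
  have key := hC _ (kbU u lam) hU hUc
  have hcont : Continuous fun x => ‖kbU u lam x‖ ^ 2 := hU.continuous.norm.pow 2
  have hcs := kb_hcs _ hUc
  simp only [← kbU_norm_sq u lam hl] at hpos ⊢
  have eR : ENNReal.ofReal (∫ x, ‖kbU u lam x‖ ^ 2) = ∫⁻ x, ‖kbU u lam x‖ₑ ^ (2 : ℝ) := by
    rw [ofReal_integral_eq_lintegral_ofReal (hcont.integrable_of_hasCompactSupport hcs)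
      (Filter.Eventually.of_forall fun x => by positivity)]
    refine lintegral_congr fun x => ?_
    rw [ENNReal.ofReal_pow (norm_nonneg _), ofReal_norm]
    norm_num
  have hp : (0 : ℝ) < 1 + 2 / d := by positivity
  have eS : ENNReal.ofReal (∫ x, (‖kbU u lam x‖ ^ 2) ^ (1 + 2 / (d : ℝ)))
      = ∫⁻ x, ‖kbU u lam x‖ₑ ^ (2 + 4 / (d : ℝ)) := by
    rw [ofReal_integral_eq_lintegral_ofReal
      ((hcont.rpow_const fun x => Or.inr hp.le).integrable_of_hasCompactSupport
        (hcs.comp_left (g := fun t : ℝ => t ^ (1 + 2 / (d : ℝ))) (Real.zero_rpow hp.ne')))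
      (Filter.Eventually.of_forall fun x => by positivity)]
    refine lintegral_congr fun x => ?_
    rw [← ENNReal.ofReal_rpow_of_nonneg (by positivity) hp.le,
      ENNReal.ofReal_pow (norm_nonneg _), ofReal_norm, ← ENNReal.rpow_natCast,
      ← ENNReal.rpow_mul]
    congr 1
    push_cast
    ring
  have hgi : ∀ n, Integrable (fun x => lam n * gradSq (u n) x) := fun n =>
    (gradSq_integrable (u n) (hu n) (hc n)).const_mul _
  have hg0 : ∀ n x, 0 ≤ gradSq (u n) x := fun n x => by unfold gradSq; positivity
  have eG : ∫⁻ x, ‖fderiv ℝ (kbU u lam) x‖ₑ ^ (2 : ℝ)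
      ≤ ENNReal.ofReal (∑ n, lam n * ∫ x, gradSq (u n) x) := by
    have : ∑ n, lam n * ∫ x, gradSq (u n) x = ∫ x, ∑ n, lam n * gradSq (u n) x := by
      rw [integral_finsetSum _ fun n _ => hgi n]
      simp only [integral_const_mul]
    rw [this, ofReal_integral_eq_lintegral_ofReal (integrable_finsetSum _ fun n _ => hgi n)
      (Filter.Eventually.of_forall fun x =>
        Finset.sum_nonneg fun n _ => mul_nonneg (hl n) (hg0 n x))]
    refine lintegral_mono fun x => ?_
    have := ENNReal.ofReal_le_ofReal (kbU_fderiv u lam hu hl x)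
    rw [ENNReal.ofReal_pow (norm_nonneg _), ofReal_norm] at this
    simpa using this
  have hG0 : 0 ≤ ∑ n, lam n * ∫ x, gradSq (u n) x :=
    Finset.sum_nonneg fun n _ => mul_nonneg (hl n) (integral_nonneg (hg0 n))
  set R := ∫ x, ‖kbU u lam x‖ ^ 2
  set S := ∫ x, (‖kbU u lam x‖ ^ 2) ^ (1 + 2 / (d : ℝ))
  set G := ∑ n, lam n * ∫ x, gradSq (u n) x
  have hRp : 0 < R ^ (2 / (d : ℝ)) := Real.rpow_pos_of_pos hpos _
  have main : S ≤ C * R ^ (2 / (d : ℝ)) * G := by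
    rw [← ENNReal.ofReal_le_ofReal_iff (by positivity), eS, ENNReal.ofReal_mul (by positivity),
      ENNReal.ofReal_mul (by positivity), ← ENNReal.ofReal_rpow_of_pos hpos, eR,
      ENNReal.ofReal_coe_nnreal]
    exact key.trans (mul_le_mul_right eG _)
  have hC0 : (0 : ℝ) ≤ C := C.2
  rw [Real.rpow_neg hpos.le, ge_iff_le]
  calc 1 / ((C : ℝ) + 1) * (R ^ (2 / (d : ℝ)))⁻¹ * S
      ≤ 1 / ((C : ℝ) + 1) * (R ^ (2 / (d : ℝ)))⁻¹ * ((C + 1) * R ^ (2 / (d : ℝ)) * G) := by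
        gcongr
        refine main.trans ?_
        gcongr
        linarith
    _ = G := by
        field_simp
end

section
/- (Lieb–Thirring inequality, finite orthonormal families) There exists a constant K_d > 0 depending only on the dimension d such that: for every N ≥ 1, every family u_1, …, u_N of smooth compactly supported functions from ℝ^d to ℂ that is orthonormal in L²(ℝ^d), and every choice of coefficients λ_1, …, λ_N ∈ [0,1], one has Σ_{n=1}^N λ_n ∫_{ℝ^d} |∇u_n(x)|² dx ≥ K_d ∫_{ℝ^d} ρ(x)^{1+2/d} dx, where ρ(x) = Σ_{n=1}^N λ_n |u_n(x)|². The constant K_d is independent of N. -/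
open MeasureTheory
open scoped BigOperators

open SchwartzMap FourierTransform

local notation "V" d => EuclideanSpace ℝ (Fin d)

/-- Dyadic layer-cake bound. -/
lemma lt_dyadic (r : ℝ) (hr : 0 ≤ r) :
    ∑' j : ℤ, ENNReal.ofReal ((4:ℝ) ^ j * (if (2:ℝ) ^ j < r then 1 else 0))
      ≤ ENNReal.ofReal (2 * r ^ 2) := by
  rcases hr.eq_or_lt with rfl | hr
  · have : ∀ j : ℤ, ¬ ((2:ℝ) ^ j < 0) := fun j => not_lt.2 (by positivity)
    simp [this]
  obtain ⟨m, hm1, hm2⟩ := exists_mem_Ioc_zpow hr (one_lt_two)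
  have hinj : Function.Injective (fun i : ℕ => m - (i:ℤ)) := by
    intro a b h
    simp at h
    exact h
  rw [← hinj.tsum_eq]
  · have h4 : (4:ℝ) ^ m ≤ r ^ 2 := by
      have : (4:ℝ) ^ m = ((2:ℝ) ^ m) ^ 2 := by
        rw [← zpow_natCast, ← zpow_mul, mul_comm, zpow_mul]; norm_num
      rw [this]
      gcongr
    calc ∑' i : ℕ, ENNReal.ofReal ((4:ℝ) ^ (m - (i:ℤ)) * (if (2:ℝ) ^ (m - (i:ℤ)) < r then 1 else 0))
        ≤ ∑' i : ℕ, ENNReal.ofReal ((r ^ 2) * (1/2) ^ i) := by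
          refine ENNReal.tsum_le_tsum fun i => ENNReal.ofReal_le_ofReal ?_
          have h1 : (4:ℝ) ^ (m - (i:ℤ)) = 4 ^ m * (1/4) ^ i := by
            rw [zpow_sub₀ (by norm_num)]; simp [div_eq_mul_inv]
          have h2 : (if (2:ℝ) ^ (m - (i:ℤ)) < r then (1:ℝ) else 0) ≤ 1 := by split_ifs <;> norm_num
          calc _ ≤ (4:ℝ) ^ (m - (i:ℤ)) * 1 := by gcongr
            _ = 4 ^ m * (1/4) ^ i := by rw [h1, mul_one]
            _ ≤ _ := by gcongr; norm_num
      _ = ENNReal.ofReal (∑' i : ℕ, (r ^ 2) * (1/2) ^ i) := by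
          rw [ENNReal.ofReal_tsum_of_nonneg]
          · intro i; positivity
          · exact summable_geometric_two.mul_left _
      _ = _ := by
          rw [tsum_mul_left, tsum_geometric_two, mul_comm]
  · intro j hj
    have hj : (2:ℝ) ^ j < r := by
      by_contra h
      simp [h] at hj
    have : j < m + 1 := (zpow_lt_zpow_iff_right₀ (one_lt_two (α := ℝ))).1 (hj.trans_le hm2)
    exact ⟨(m - j).toNat, by simp; omega⟩

lemma lt_choose (d : ℕ) (hd : 1 ≤ d) (c : ℝ) (hc : 0 < c) (ρ : ℝ) (hρ : 0 < ρ) :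
    ∃ j : ℤ, c * ((2:ℝ) ^ j) ^ d ≤ ρ / 4 ∧
      (1 / (4 * c)) ^ (2 / (d:ℝ)) / 4 * ρ ^ (2 / (d:ℝ)) ≤ 4 ^ j := by
  have hd' : (d:ℝ) ≠ 0 := by positivity
  set t : ℝ := (1 / (4 * c) * ρ) ^ (1 / (d:ℝ)) with ht
  have htpos : 0 < t := by positivity
  obtain ⟨j, h1, h2⟩ := exists_mem_Ico_zpow htpos (one_lt_two)
  refine ⟨j, ?_, ?_⟩
  · have : t ^ d = 1 / (4 * c) * ρ := by
      rw [ht, ← Real.rpow_natCast, ← Real.rpow_mul (by positivity), one_div_mul_cancel hd',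
        Real.rpow_one]
    calc c * ((2:ℝ) ^ j) ^ d ≤ c * t ^ d := by gcongr
      _ = ρ / 4 := by
        rw [this, one_div, mul_inv]
        have := mul_inv_cancel₀ hc.ne'
        linear_combination ρ / 4 * this
  · have h4 : (4:ℝ) ^ j = ((2:ℝ) ^ j) ^ 2 := by
      rw [← zpow_natCast, ← zpow_mul, mul_comm, zpow_mul]; norm_num
    have ht2 : t ^ 2 = (1 / (4 * c)) ^ (2 / (d:ℝ)) * ρ ^ (2 / (d:ℝ)) := by
      rw [ht, ← Real.rpow_natCast, ← Real.rpow_mul (by positivity), ← Real.mul_rpow (by positivity) (by positivity)]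
      congr 1
      push_cast; ring
    have h5 : t / 2 ≤ 2 ^ j := by
      rw [zpow_add₀ (by norm_num)] at h2
      simp at h2
      linarith
    calc _ = (t / 2) ^ 2 := by rw [div_pow, ht2]; ring
      _ ≤ ((2:ℝ) ^ j) ^ 2 := by gcongr
      _ = _ := h4.symm

/-- Gradient in Fourier space. -/
lemma lt_grad {d : ℕ} (f : 𝓢(V d, ℂ)) :
    ∫⁻ k, ENNReal.ofReal (‖k‖ ^ 2) * ENNReal.ofReal (‖𝓕 f k‖ ^ 2)
      = ENNReal.ofReal ((1 / (2 * Real.pi)) ^ 2 * ∫ x, gradSq f x) := by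
  open LineDeriv in
  have hIntegr : ∀ g : 𝓢(V d, ℂ), Integrable (fun x => ‖g x‖ ^ 2) := fun g =>
    (g.memLp 2).integrable_norm_pow (by norm_num)
  have h1 : ∀ i : Fin d, ∫ x, ‖fderiv ℝ f x (EuclideanSpace.single i 1)‖ ^ 2
      = ∫ k, ‖𝓕 (∂_{(EuclideanSpace.single i 1 : V d)} f) k‖ ^ 2 := by
    intro i
    rw [integral_norm_sq_fourier]
    rfl
  have h2 : ∀ k, ∑ i : Fin d, ‖𝓕 (∂_{(EuclideanSpace.single i 1 : V d)} f) k‖ ^ 2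
      = (2 * Real.pi) ^ 2 * (‖k‖ ^ 2 * ‖𝓕 f k‖ ^ 2) := by
    intro k
    have hg : ∀ m : V d, (inner ℝ · m).HasTemperateGrowth := fun m => by fun_prop
    have : ∀ i : Fin d, ‖𝓕 (∂_{(EuclideanSpace.single i 1 : V d)} f) k‖ ^ 2
        = (2 * Real.pi) ^ 2 * ((k i) ^ 2 * ‖𝓕 f k‖ ^ 2) := by
      intro i
      rw [fourier_lineDerivOp_eq]
      rw [_root_.smul_apply, smulLeftCLM_apply_apply (hg _), EuclideanSpace.inner_single_right]
      simp [mul_pow]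
    rw [Finset.sum_congr rfl fun i _ => this i, ← Finset.mul_sum, ← Finset.sum_mul,
      EuclideanSpace.norm_sq_eq]
    simp
  have h3 : ∫ x, gradSq f x = ∫ k, (2 * Real.pi) ^ 2 * (‖k‖ ^ 2 * ‖𝓕 f k‖ ^ 2) := by
    unfold gradSq
    rw [integral_finsetSum]
    · simp_rw [h1, ← h2]
      rw [integral_finsetSum]
      exact fun i _ => hIntegr _
    · exact fun i _ => hIntegr (∂_{(EuclideanSpace.single i 1 : V d)} f)
  have h4 : Integrable (fun k => (2 * Real.pi) ^ 2 * (‖k‖ ^ 2 * ‖𝓕 f k‖ ^ 2)) := by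
    simp_rw [← h2]
    exact integrable_finsetSum _ fun i _ => hIntegr _
  rw [h3, ← integral_const_mul, ofReal_integral_eq_lintegral_ofReal (h4.const_mul _)
    (Filter.Eventually.of_forall fun k => by positivity)]
  refine lintegral_congr fun k => ?_
  rw [← ENNReal.ofReal_mul (by positivity)]
  congr 1
  field_simp

/-- bump at scale `2^j` -/
noncomputable def ltBump (d : ℕ) (j : ℤ) : ContDiffBump (0 : V d) where
  rIn := 2 ^ j
  rOut := 2 * 2 ^ j
  rIn_pos := by positivity
  rIn_lt_rOut := by have : (0:ℝ) < 2 ^ j := by positivity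
                    linarith

lemma ltBump_growth (d : ℕ) (j : ℤ) : (ltBump d j : (V d) → ℝ).HasTemperateGrowth :=
  (ltBump d j).hasCompactSupport.hasTemperateGrowth (ltBump d j).contDiff

/-- low-frequency part -/
noncomputable def ltLow {d : ℕ} (j : ℤ) (f : 𝓢(V d, ℂ)) : 𝓢(V d, ℂ) :=
  𝓕⁻ (smulLeftCLM ℂ (ltBump d j) (𝓕 f))

lemma lt_high {d : ℕ} (j : ℤ) (f : 𝓢(V d, ℂ)) :
    ∫⁻ x, ENNReal.ofReal (‖f x - ltLow j f x‖ ^ 2)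
      ≤ ∫⁻ k, ENNReal.ofReal (if (2:ℝ) ^ j < ‖k‖ then 1 else 0) * ENNReal.ofReal (‖𝓕 f k‖ ^ 2) := by
  have hIntegr : ∀ g : 𝓢(V d, ℂ), Integrable (fun x => ‖g x‖ ^ 2) := fun g =>
    (g.memLp 2).integrable_norm_pow (by norm_num)
  have h0 : 𝓕 (f - ltLow j f) = 𝓕 f - smulLeftCLM ℂ (ltBump d j) (𝓕 f) := by
    rw [sub_eq_add_neg, FourierTransform.fourier_add, FourierTransform.fourier_neg, ltLow, FourierTransform.fourier_fourierInv_eq,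
      sub_eq_add_neg]
  calc ∫⁻ x, ENNReal.ofReal (‖f x - ltLow j f x‖ ^ 2)
      = ∫⁻ x, ENNReal.ofReal (‖(f - ltLow j f) x‖ ^ 2) := rfl
    _ = ENNReal.ofReal (∫ x, ‖(f - ltLow j f) x‖ ^ 2) := by
        rw [ofReal_integral_eq_lintegral_ofReal (hIntegr _)
          (Filter.Eventually.of_forall fun k => by positivity)]
    _ = ENNReal.ofReal (∫ x, ‖𝓕 (f - ltLow j f) x‖ ^ 2) := by rw [integral_norm_sq_fourier]
    _ = ∫⁻ x, ENNReal.ofReal (‖𝓕 (f - ltLow j f) x‖ ^ 2) := by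
        rw [ofReal_integral_eq_lintegral_ofReal (hIntegr _)
          (Filter.Eventually.of_forall fun k => by positivity)]
    _ ≤ _ := by
        refine lintegral_mono fun k => ?_
        rw [← ENNReal.ofReal_mul (by split_ifs <;> norm_num), h0]
        refine ENNReal.ofReal_le_ofReal ?_
        have e : (𝓕 f - smulLeftCLM ℂ (ltBump d j) (𝓕 f)) k = (1 - ltBump d j k) • 𝓕 f k := by
          rw [_root_.sub_apply, smulLeftCLM_apply_apply (ltBump_growth d j), sub_smul, one_smul]
        rw [e, norm_smul, mul_pow]
        gcongr
        split_ifs with h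
        · have h1 := (ltBump d j).nonneg (x := k)
          have h2 := (ltBump d j).le_one (x := k)
          rw [Real.norm_eq_abs, sq_abs]
          nlinarith
        · rw [(ltBump d j).one_of_mem_closedBall (by simpa [ltBump] using h)]
          simp

lemma lt_bessel {d N : ℕ} (j : ℤ) (f : Fin N → 𝓢(V d, ℂ))
    (hf : Orthonormal ℂ (fun n => (f n).toLp 2 (volume : Measure (V d)))) (x : V d) :
    ∑ n, ‖ltLow j (f n) x‖ ^ 2 ≤ (2 ^ d * volume.real (Metric.ball (0 : V d) 1)) * ((2:ℝ) ^ j) ^ d := by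
  set h : (V d) → ℂ := fun k => (Real.fourierChar (-inner ℝ k x) : ℂ) * ((ltBump d j k : ℝ) : ℂ) with hh
  have hcont : Continuous h := by
    have := (ltBump d j).continuous
    fun_prop
  have hsupp : HasCompactSupport h := by
    refine HasCompactSupport.mul_left ?_
    exact (ltBump d j).hasCompactSupport.comp_left (g := fun r : ℝ => (r:ℂ)) (by simp)
  have hmem : MemLp h 2 (volume : Measure (V d)) := hcont.memLp_of_hasCompactSupport hsupp
  have horth : Orthonormal ℂ (fun n => (𝓕 (f n)).toLp 2 (volume : Measure (V d))) := by
    rw [orthonormal_iff_ite] at hf ⊢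
    intro m n
    rw [inner_fourier_toL2_eq]
    exact hf m n
  have hB := horth.sum_inner_products_le (s := Finset.univ) (hmem.toLp h)
  have e1 : ∀ n, ‖inner ℂ ((𝓕 (f n)).toLp 2 (volume : Measure (V d))) (hmem.toLp h)‖ = ‖ltLow j (f n) x‖ := by
    intro n
    rw [norm_inner_symm, L2.inner_def, ltLow, fourierInv_coe, Real.fourierInv_eq]
    congr 1
    refine integral_congr_ae ?_
    filter_upwards [hmem.coeFn_toLp, (𝓕 (f n)).coeFn_toLp 2 (volume : Measure (V d))] with k h1 h2
    rw [h1, h2, smulLeftCLM_apply_apply (ltBump_growth d j)]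
    simp [hh, Circle.smul_def, ← Circle.coe_inv_eq_conj, AddChar.map_neg_eq_inv]
    ring
  have e2 : ‖hmem.toLp h‖ ^ 2 ≤ volume.real (Metric.ball (0 : V d) (2 * 2 ^ j)) := by
    rw [@norm_sq_eq_re_inner ℂ, L2.inner_def]
    have : ∫ a, inner ℂ (hmem.toLp h a) (hmem.toLp h a) = ∫ a, (((ltBump d j a) ^ 2 : ℝ) : ℂ) := by
      refine integral_congr_ae ?_
      filter_upwards [hmem.coeFn_toLp] with k h1
      have h3 : ‖h k‖ ^ 2 = (ltBump d j k) ^ 2 := by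
        simp only [hh]
        rw [norm_mul, Circle.norm_coe, one_mul, Complex.norm_real, Real.norm_eq_abs, sq_abs]
      rw [h1, inner_self_eq_norm_sq_to_K, ← h3]
      simp
    rw [this, integral_complex_ofReal]
    calc _ = ∫ a, (ltBump d j a) ^ 2 := by simp
      _ ≤ ∫ a, (Metric.ball (0 : V d) (2 * 2 ^ j)).indicator (fun _ => (1:ℝ)) a := by
        refine integral_mono_of_nonneg (Filter.Eventually.of_forall fun a => by positivity) ?_
          (Filter.Eventually.of_forall fun a => ?_)
        · exact (integrable_indicator_iff measurableSet_ball).2 (integrableOn_const measure_ball_lt_top.ne)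
        · by_cases ha : a ∈ Metric.ball (0 : V d) (2 * 2 ^ j)
          · have h1 := (ltBump d j).nonneg (x := a)
            have h2 := (ltBump d j).le_one (x := a)
            simp only [Set.indicator_of_mem ha]
            nlinarith
          · have : ltBump d j a = 0 := (ltBump d j).zero_of_le_dist (by simpa [ltBump] using ha)
            simp only [Set.indicator_of_notMem ha, this]
            norm_num
      _ = _ := by
        rw [integral_indicator measurableSet_ball]; simp
  simp_rw [e1] at hB
  refine hB.trans (e2.trans (le_of_eq ?_))
  rw [Measure.real, Measure.addHaar_ball_of_pos _ _ (by positivity)]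
  rw [ENNReal.toReal_mul, ENNReal.toReal_ofReal (by positivity), finrank_euclideanSpace_fin, mul_pow, Measure.real]
  ring

theorem lieb_thirring_finite (d : ℕ) (hd : 1 ≤ d) :
    ∃ K : ℝ, 0 < K ∧
      ∀ (N : ℕ), 1 ≤ N →
      ∀ (u : Fin N → EuclideanSpace ℝ (Fin d) → ℂ) (lam : Fin N → ℝ),
        (∀ n, ContDiff ℝ (⊤ : ℕ∞) (u n)) →
        (∀ n, HasCompactSupport (u n)) →
        (∀ m n : Fin N, ∫ x, u m x * (starRingEnd ℂ) (u n x) = if m = n then 1 else 0) →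
        (∀ n, 0 ≤ lam n ∧ lam n ≤ 1) →
        ∑ n, lam n * ∫ x, gradSq (u n) x
          ≥ K * ∫ x, (∑ n, lam n * ‖u n x‖ ^ 2) ^ (1 + 2 / (d : ℝ)) := by
  set c : ℝ := 2 ^ d * volume.real (Metric.ball (0 : V d) 1) with hcdef
  have hc : 0 < c := by
    have : 0 < volume.real (Metric.ball (0 : V d) 1) :=
      ENNReal.toReal_pos (Metric.measure_ball_pos _ _ one_pos).ne' measure_ball_lt_top.ne
    positivity
  set κ : ℝ := (1 / (4 * c)) ^ (2 / (d:ℝ)) / 4 with hκdef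
  have hκ : 0 < κ := by positivity
  have hd' : (0:ℝ) < d := by positivity
  set G : ℝ := 2 * (1 / (2 * Real.pi)) ^ 2 with hG
  have hGpos : 0 < G := by positivity
  refine ⟨(κ / 4) / G, by positivity, ?_⟩
  intro N hN u lam hu hsupp horth hlam
  set f : Fin N → 𝓢(V d, ℂ) := fun n => (hsupp n).toSchwartzMap (hu n) with hf
  have hfu : ∀ n x, u n x = f n x := fun n x => rfl
  have hfu' : ∀ n, u n = f n := fun n => rfl
  have hO : Orthonormal ℂ (fun n => (f n).toLp 2 (volume : Measure (V d))) := by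
    rw [orthonormal_iff_ite]
    intro m n
    rw [inner_toL2_toL2_eq (f m) (f n) volume]
    have := horth n m
    simp only [hfu] at this
    simpa [eq_comm] using this
  set ρ : (V d) → ℝ := fun x => ∑ n, lam n * ‖u n x‖ ^ 2 with hρ
  have hρ0 : ∀ x, 0 ≤ ρ x := fun x =>
    Finset.sum_nonneg fun n _ => mul_nonneg (hlam n).1 (by positivity)
  set ρj : ℤ → (V d) → ℝ := fun j x => ∑ n, lam n * ‖f n x - ltLow j (f n) x‖ ^ 2 with hρj
  have hρj0 : ∀ j x, 0 ≤ ρj j x := fun j x =>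
    Finset.sum_nonneg fun n _ => mul_nonneg (hlam n).1 (by positivity)
  have hsplit : ∀ j x, ρ x ≤ 2 * ρj j x + 2 * (c * ((2:ℝ) ^ j) ^ d) := by
    intro j x
    have hb := lt_bessel j f hO x
    rw [← hcdef] at hb
    have h1 : ρ x ≤ ∑ n, (2 * (lam n * ‖f n x - ltLow j (f n) x‖ ^ 2) + 2 * ‖ltLow j (f n) x‖ ^ 2) := by
      refine Finset.sum_le_sum fun n _ => ?_
      have h2 : ‖u n x‖ ≤ ‖f n x - ltLow j (f n) x‖ + ‖ltLow j (f n) x‖ := by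
        rw [hfu]
        calc ‖f n x‖ = ‖(f n x - ltLow j (f n) x) + ltLow j (f n) x‖ := by rw [sub_add_cancel]
          _ ≤ _ := norm_add_le _ _
      have h3 : ‖u n x‖ ^ 2 ≤ 2 * ‖f n x - ltLow j (f n) x‖ ^ 2 + 2 * ‖ltLow j (f n) x‖ ^ 2 := by
        nlinarith [norm_nonneg (u n x), sq_nonneg (‖f n x - ltLow j (f n) x‖ - ‖ltLow j (f n) x‖)]
      have h4 : lam n * ‖ltLow j (f n) x‖ ^ 2 ≤ ‖ltLow j (f n) x‖ ^ 2 :=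
        mul_le_of_le_one_left (by positivity) (hlam n).2
      have h5 := mul_le_mul_of_nonneg_left h3 (hlam n).1
      linarith
    rw [Finset.sum_add_distrib, ← Finset.mul_sum, ← Finset.mul_sum] at h1
    have h6 : ρj j x = ∑ n, lam n * ‖f n x - ltLow j (f n) x‖ ^ 2 := rfl
    rw [h6]
    linarith
  have hpt : ∀ x, ENNReal.ofReal (κ / 4 * ρ x ^ (1 + 2 / (d:ℝ)))
      ≤ ∑' j : ℤ, ENNReal.ofReal ((4:ℝ) ^ j * ρj j x) := by
    intro x
    rcases (hρ0 x).eq_or_lt with h | h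
    · rw [← h, Real.zero_rpow (by positivity)]
      simp
    · obtain ⟨j, h1, h2⟩ := lt_choose d hd c hc (ρ x) h
      refine le_trans (ENNReal.ofReal_le_ofReal ?_) (ENNReal.le_tsum j)
      have h3 := hsplit j x
      have h4 : ρ x / 4 ≤ ρj j x := by linarith
      rw [Real.rpow_add h, Real.rpow_one]
      calc κ / 4 * (ρ x * ρ x ^ (2 / (d:ℝ))) = (κ * ρ x ^ (2 / (d:ℝ))) * (ρ x / 4) := by ring
        _ ≤ (4:ℝ) ^ j * ρj j x := by gcongr
  have hmeas : ∀ n j, Measurable (fun x => ENNReal.ofReal (‖f n x - ltLow j (f n) x‖ ^ 2)) := by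
    intro n j
    have h1 := (f n).continuous
    have h2 := (ltLow j (f n)).continuous
    exact (by fun_prop : Continuous fun x => ‖f n x - ltLow j (f n) x‖ ^ 2).measurable.ennreal_ofReal
  have hmeasρ : ∀ j, Measurable (fun x => ENNReal.ofReal ((4:ℝ) ^ j * ρj j x)) := by
    intro j
    have h1 := fun n => (f n).continuous
    have h2 := fun n => (ltLow j (f n)).continuous
    exact (by fun_prop : Continuous fun x => (4:ℝ) ^ j * ρj j x).measurable.ennreal_ofReal
  have hj : ∀ j : ℤ, ∫⁻ x, ENNReal.ofReal ((4:ℝ) ^ j * ρj j x) ≤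
      ∑ n, ENNReal.ofReal (lam n) * ∫⁻ k, ENNReal.ofReal ((4:ℝ) ^ j * (if (2:ℝ) ^ j < ‖k‖ then 1 else 0))
        * ENNReal.ofReal (‖𝓕 (f n) k‖ ^ 2) := by
    intro j
    have e : ∀ x, ENNReal.ofReal ((4:ℝ) ^ j * ρj j x) = ∑ n, ENNReal.ofReal (lam n) *
        (ENNReal.ofReal ((4:ℝ) ^ j) * ENNReal.ofReal (‖f n x - ltLow j (f n) x‖ ^ 2)) := by
      intro x
      rw [hρj, Finset.mul_sum, ENNReal.ofReal_sum_of_nonneg]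
      · refine Finset.sum_congr rfl fun n _ => ?_
        rw [← ENNReal.ofReal_mul (by positivity), ← ENNReal.ofReal_mul (hlam n).1]
        congr 1; ring
      · intro n _
        exact mul_nonneg (by positivity) (mul_nonneg (hlam n).1 (by positivity))
    simp_rw [e]
    rw [lintegral_finsetSum _ (fun n _ => ((hmeas n j).const_mul _).const_mul _)]
    refine Finset.sum_le_sum fun n _ => ?_
    rw [lintegral_const_mul _ ((hmeas n j).const_mul _), lintegral_const_mul _ (hmeas n j)]
    gcongr
    calc _ ≤ ENNReal.ofReal ((4:ℝ) ^ j) * _ := mul_le_mul_right (lt_high j (f n)) _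
      _ = _ := by
        rw [← lintegral_const_mul' _ _ ENNReal.ofReal_ne_top]
        refine lintegral_congr fun k => ?_
        rw [← mul_assoc, ← ENNReal.ofReal_mul (by positivity)]
  have hmeasF : ∀ (n : Fin N) (j : ℤ), Measurable (fun k : V d =>
      ENNReal.ofReal ((4:ℝ) ^ j * (if (2:ℝ) ^ j < ‖k‖ then 1 else 0))
        * ENNReal.ofReal (‖𝓕 (f n) k‖ ^ 2)) := by
    intro n j
    have h1 := (𝓕 (f n)).continuous
    refine Measurable.fun_mul ?_ ?_
    · refine (Measurable.const_mul ?_ _).ennreal_ofReal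
      exact Measurable.ite (measurableSet_lt measurable_const measurable_norm) measurable_const measurable_const
    · exact (by fun_prop : Continuous fun x => ‖𝓕 (f n) x‖ ^ 2).measurable.ennreal_ofReal
  have hgr0 : ∀ n, 0 ≤ ∫ x, gradSq (u n) x := fun n =>
    integral_nonneg fun x => Finset.sum_nonneg fun i _ => by positivity
  have hmain : ∫⁻ x, ENNReal.ofReal (κ / 4 * ρ x ^ (1 + 2 / (d:ℝ)))
      ≤ ENNReal.ofReal (G * ∑ n, lam n * ∫ x, gradSq (u n) x) := by
    calc _ ≤ ∫⁻ x, ∑' j : ℤ, ENNReal.ofReal ((4:ℝ) ^ j * ρj j x) := lintegral_mono hpt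
      _ = ∑' j : ℤ, ∫⁻ x, ENNReal.ofReal ((4:ℝ) ^ j * ρj j x) :=
          lintegral_tsum fun j => (hmeasρ j).aemeasurable
      _ ≤ ∑' j : ℤ, ∑ n, ENNReal.ofReal (lam n) *
          ∫⁻ k, ENNReal.ofReal ((4:ℝ) ^ j * (if (2:ℝ) ^ j < ‖k‖ then 1 else 0))
            * ENNReal.ofReal (‖𝓕 (f n) k‖ ^ 2) := ENNReal.tsum_le_tsum hj
      _ = ∑ n, ENNReal.ofReal (lam n) *
          ∫⁻ k, (∑' j : ℤ, ENNReal.ofReal ((4:ℝ) ^ j * (if (2:ℝ) ^ j < ‖k‖ then 1 else 0)))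
            * ENNReal.ofReal (‖𝓕 (f n) k‖ ^ 2) := by
          rw [Summable.tsum_finsetSum fun _ _ => ENNReal.summable]
          refine Finset.sum_congr rfl fun n _ => ?_
          rw [ENNReal.tsum_mul_left, ← lintegral_tsum fun j => (hmeasF n j).aemeasurable]
          simp_rw [ENNReal.tsum_mul_right]
      _ ≤ ∑ n, ENNReal.ofReal (lam n) *
          ∫⁻ k, ENNReal.ofReal 2 * (ENNReal.ofReal (‖k‖ ^ 2) * ENNReal.ofReal (‖𝓕 (f n) k‖ ^ 2)) := by
          refine Finset.sum_le_sum fun n _ => ?_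
          refine mul_le_mul_right (lintegral_mono fun k => ?_) _
          rw [← mul_assoc, ← ENNReal.ofReal_mul (by norm_num)]
          exact mul_le_mul_left (lt_dyadic ‖k‖ (norm_nonneg k)) _
      _ = ∑ n, ENNReal.ofReal (G * (lam n * ∫ x, gradSq (u n) x)) := by
          refine Finset.sum_congr rfl fun n _ => ?_
          rw [lintegral_const_mul' _ _ ENNReal.ofReal_ne_top, lt_grad,
            ← ENNReal.ofReal_mul (by norm_num), ← ENNReal.ofReal_mul (hlam n).1, hfu' n, hG]
          congr 1; ring
      _ = _ := by
          rw [Finset.mul_sum, ENNReal.ofReal_sum_of_nonneg]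
          exact fun n _ => mul_nonneg hGpos.le (mul_nonneg (hlam n).1 (hgr0 n))
  have hρc : Continuous ρ := by
    have h1 := fun n => (hu n).continuous
    fun_prop
  have hcont : Continuous (fun x => κ / 4 * ρ x ^ (1 + 2 / (d:ℝ))) :=
    continuous_const.mul (hρc.rpow_const fun x => Or.inr (by positivity))
  have hS : 0 ≤ G * ∑ n, lam n * ∫ x, gradSq (u n) x :=
    mul_nonneg hGpos.le (Finset.sum_nonneg fun n _ => mul_nonneg (hlam n).1 (hgr0 n))
  have hfin : κ / 4 * ∫ x, ρ x ^ (1 + 2 / (d:ℝ)) ≤ G * ∑ n, lam n * ∫ x, gradSq (u n) x := by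
    rw [← integral_const_mul, integral_eq_lintegral_of_nonneg_ae
      (Filter.Eventually.of_forall fun x => mul_nonneg (by positivity) (Real.rpow_nonneg (hρ0 x) _))
      hcont.aestronglyMeasurable]
    exact ENNReal.toReal_le_of_le_ofReal hS hmain
  rw [ge_iff_le, div_mul_eq_mul_div, div_le_iff₀ hGpos]
  linarith
end
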